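/- Let S be a quasi-hereditary algebra with a simple-preserving duality whose partial order is minimal for the quasi-hereditary structure. If S satisfies property A (μ < λ implies gfd(L(μ)) ≤ gfd(L(λ))), then S satisfies property D (wfd(∇(λ)) = wfd(L(λ)) for all λ ∈ Λ⁺). -/

import Mathlib

/-!
Common definitions for formalizing "On the global and ∇-filtration dimensions of
quasi-hereditary algebras" by Erdmann and Parker.

We work with a finite-dimensional algebra `S` over a field `k`; since `S` is
finite dimensional over `k`, the finite-dimensional `S`-modules are exactly the
finitely generated ones, so we express finite-dimensionality of a module `M` as
`Module.Finite S M`.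
-/

open CategoryTheory

namespace QHPaper

variable (S : Type) [Ring S]

/-- The subquotient `B ⧸ A` associated to two submodules `A B` of `M`. -/
abbrev subquot {M : ModuleCat.{0} S} (A B : Submodule S ↥M) : Type :=
  ↥B ⧸ (Submodule.comap B.subtype A)

/-- A filtration `⊥ = f 0 ≤ f 1 ≤ ⋯ ≤ f n = ⊤` of `M` whose `i`-th section
`f (i+1) / f i` is isomorphic to the prescribed module `D i`. -/
def HasFiltrationWithSections (M : ModuleCat.{0} S) (n : ℕ)
    (f : Fin (n + 1) → Submodule S ↥M) (D : Fin n → ModuleCat.{0} S) : Prop :=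
  Monotone f ∧ f 0 = ⊥ ∧ f (Fin.last n) = ⊤ ∧
    ∀ i : Fin n, Nonempty ((subquot S (f i.castSucc) (f i.succ)) ≃ₗ[S] ↥(D i))

/-- `L` occurs as a (simple) subquotient of `M`; for `L` simple this says that `L`
is a composition factor of `M`. -/
def IsCompFactor (L M : ModuleCat.{0} S) : Prop :=
  ∃ (A B : Submodule S ↥M), A ≤ B ∧ Nonempty ((subquot S A B) ≃ₗ[S] ↥L)

/-- `L` occurs with multiplicity `m` among the sections of a composition series of `M`. -/
def CompFactorMult (L M : ModuleCat.{0} S) (m : ℕ) : Prop :=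
  ∃ (n : ℕ) (f : Fin (n + 1) → Submodule S ↥M),
    Monotone f ∧ f 0 = ⊥ ∧ f (Fin.last n) = ⊤ ∧
    (∀ i : Fin n, IsSimpleModule S (subquot S (f i.castSucc) (f i.succ))) ∧
    Nat.card {i : Fin n // Nonempty ((subquot S (f i.castSucc) (f i.succ)) ≃ₗ[S] ↥L)} = m

/-- `P` is a projective cover of `M`: `P` is projective and there is a surjection
`P → M` whose kernel is superfluous in `P`. -/
def IsProjCover (P M : ModuleCat.{0} S) : Prop :=
  Module.Projective S ↥P ∧ ∃ π : ↥P →ₗ[S] ↥M, Function.Surjective π ∧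
    ∀ N : Submodule S ↥P, N ⊔ LinearMap.ker π = ⊤ → N = ⊤

/-- `I` is an injective hull of `M`: `I` is injective and there is an injection
`M → I` with essential image. -/
def IsInjHull (I M : ModuleCat.{0} S) : Prop :=
  Module.Injective S ↥I ∧ ∃ ι : ↥M →ₗ[S] ↥I, Function.Injective ι ∧
    ∀ N : Submodule S ↥I, N ⊓ LinearMap.range ι = ⊥ → N = ⊥

/-- The data of a quasi-hereditary algebra structure on `S` with weight poset `Λ`:
a full set `L` of pairwise non-isomorphic simple modules, their projective covers `P`
and injective hulls `I`, the standard modules `std` (largest quotient of `P lam` with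
all composition factors `L mu`, `mu ≤ lam`), the costandard modules `costd`
(largest submodule of `I lam` with all composition factors `L mu`, `mu ≤ lam`),
such that `L lam` occurs exactly once in `std lam` and `P lam` is filtered by
standard modules `std mu` with `mu ≥ lam`, with `std lam` occurring exactly once. -/
structure QHData (Λ : Type) [Fintype Λ] [PartialOrder Λ] where
  L : Λ → ModuleCat.{0} S
  P : Λ → ModuleCat.{0} S
  I : Λ → ModuleCat.{0} S
  std : Λ → ModuleCat.{0} S
  costd : Λ → ModuleCat.{0} S
  finiteL : ∀ lam, Module.Finite S ↥(L lam)
  simpleL : ∀ lam, IsSimpleModule S ↥(L lam)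
  nonisoL : ∀ lam mu, lam ≠ mu → IsEmpty (↥(L lam) ≃ₗ[S] ↥(L mu))
  fullL : ∀ M : ModuleCat.{0} S, IsSimpleModule S ↥M → ∃ lam, Nonempty (↥M ≃ₗ[S] ↥(L lam))
  projCover : ∀ lam, IsProjCover S (P lam) (L lam)
  injHull : ∀ lam, IsInjHull S (I lam) (L lam)
  stdSpec : ∀ lam, ∃ K : Submodule S ↥(P lam),
    Nonempty (↥(std lam) ≃ₗ[S] (↥(P lam) ⧸ K)) ∧
    (∀ mu, IsCompFactor S (L mu) (ModuleCat.of S (↥(P lam) ⧸ K)) → mu ≤ lam) ∧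
    ∀ K' : Submodule S ↥(P lam),
      (∀ mu, IsCompFactor S (L mu) (ModuleCat.of S (↥(P lam) ⧸ K')) → mu ≤ lam) → K ≤ K'
  costdSpec : ∀ lam, ∃ V : Submodule S ↥(I lam),
    Nonempty (↥(costd lam) ≃ₗ[S] ↥V) ∧
    (∀ mu, IsCompFactor S (L mu) (ModuleCat.of S ↥V) → mu ≤ lam) ∧
    ∀ V' : Submodule S ↥(I lam),
      (∀ mu, IsCompFactor S (L mu) (ModuleCat.of S ↥V') → mu ≤ lam) → V' ≤ V
  multOne : ∀ lam, CompFactorMult S (L lam) (std lam) 1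
  projFilt : ∀ lam, ∃ (n : ℕ) (f : Fin (n + 1) → Submodule S ↥(P lam)) (g : Fin n → Λ),
    HasFiltrationWithSections S (P lam) n f (fun i => std (g i)) ∧
    (∀ i, lam ≤ g i) ∧ Nat.card {i : Fin n // g i = lam} = 1

variable {Λ : Type} [Fintype Λ] [PartialOrder Λ]

/-- `M` has a filtration with costandard sections, i.e. `M ∈ F(∇)`. -/
def InCostdFilt (Q : QHData S Λ) (M : ModuleCat.{0} S) : Prop :=
  ∃ (n : ℕ) (f : Fin (n + 1) → Submodule S ↥M) (g : Fin n → Λ),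
    HasFiltrationWithSections S M n f (fun i => Q.costd (g i))

/-- `M` has a filtration with standard sections, i.e. `M ∈ F(Δ)`. -/
def InStdFilt (Q : QHData S Λ) (M : ModuleCat.{0} S) : Prop :=
  ∃ (n : ℕ) (f : Fin (n + 1) → Submodule S ↥M) (g : Fin n → Λ),
    HasFiltrationWithSections S M n f (fun i => Q.std (g i))

/-- `0 → N 0 → N 1 → ⋯ → N (n+1) → 0` is exact. -/
def IsExactSeq (n : ℕ) (N : Fin (n + 2) → ModuleCat.{0} S)
    (f : ∀ i : Fin (n + 1), ↥(N i.castSucc) →ₗ[S] ↥(N i.succ)) : Prop :=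
  Function.Injective (f 0) ∧ Function.Surjective (f (Fin.last n)) ∧
    ∀ i : Fin n, LinearMap.range (f i.castSucc) = LinearMap.ker (f i.succ)

/-- `M` has a ∇-resolution (co-resolution by modules in `F(∇)`) of length `d`:
`0 → M → M₀ → ⋯ → M_d → 0` with each `Mᵢ ∈ F(∇)`. -/
def GfdLE (Q : QHData S Λ) (M : ModuleCat.{0} S) (d : ℕ) : Prop :=
  ∃ (N : Fin (d + 2) → ModuleCat.{0} S)
    (f : ∀ i : Fin (d + 1), ↥(N i.castSucc) →ₗ[S] ↥(N i.succ)),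
    IsExactSeq S d N f ∧ N 0 = M ∧ ∀ i : Fin (d + 1), InCostdFilt S Q (N i.succ)

/-- The ∇-filtration dimension (good filtration dimension) of a module. -/
noncomputable def gfd (Q : QHData S Λ) (M : ModuleCat.{0} S) : ℕ :=
  sInf {d | GfdLE S Q M d}

/-- `M` has a resolution `0 → M_d → ⋯ → M₀ → M → 0` with each `Mᵢ ∈ F(Δ)`. -/
def WfdLE (Q : QHData S Λ) (M : ModuleCat.{0} S) (d : ℕ) : Prop :=
  ∃ (N : Fin (d + 2) → ModuleCat.{0} S)
    (f : ∀ i : Fin (d + 1), ↥(N i.castSucc) →ₗ[S] ↥(N i.succ)),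
    IsExactSeq S d N f ∧ N (Fin.last (d + 1)) = M ∧
    ∀ i : Fin (d + 1), InStdFilt S Q (N i.castSucc)

/-- The Δ-filtration dimension of a module. -/
noncomputable def wfd (Q : QHData S Λ) (M : ModuleCat.{0} S) : ℕ :=
  sInf {d | WfdLE S Q M d}

/-- `M` has a projective resolution of length `d`. -/
def ProjdimLE (M : ModuleCat.{0} S) (d : ℕ) : Prop :=
  ∃ (N : Fin (d + 2) → ModuleCat.{0} S)
    (f : ∀ i : Fin (d + 1), ↥(N i.castSucc) →ₗ[S] ↥(N i.succ)),
    IsExactSeq S d N f ∧ N (Fin.last (d + 1)) = M ∧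
    ∀ i : Fin (d + 1), Module.Projective S ↥(N i.castSucc)

/-- The projective dimension of a module. -/
noncomputable def projdim (M : ModuleCat.{0} S) : ℕ :=
  sInf {d | ProjdimLE S M d}

/-- `M` has an injective resolution of length `d`. -/
def InjdimLE (M : ModuleCat.{0} S) (d : ℕ) : Prop :=
  ∃ (N : Fin (d + 2) → ModuleCat.{0} S)
    (f : ∀ i : Fin (d + 1), ↥(N i.castSucc) →ₗ[S] ↥(N i.succ)),
    IsExactSeq S d N f ∧ N 0 = M ∧
    ∀ i : Fin (d + 1), Module.Injective S ↥(N i.succ)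

/-- The injective dimension of a module. -/
noncomputable def injdim (M : ModuleCat.{0} S) : ℕ :=
  sInf {d | InjdimLE S M d}

/-- `gfd(S)`: the supremum of the ∇-filtration dimensions of all
finite-dimensional `S`-modules. -/
noncomputable def gfdAlg (Q : QHData S Λ) : ℕ :=
  sSup {d | ∃ M : ModuleCat.{0} S, Module.Finite S ↥M ∧ gfd S Q M = d}

/-- `wfd(S)`: the supremum of the Δ-filtration dimensions of all
finite-dimensional `S`-modules. -/
noncomputable def wfdAlg (Q : QHData S Λ) : ℕ :=
  sSup {d | ∃ M : ModuleCat.{0} S, Module.Finite S ↥M ∧ wfd S Q M = d}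

/-- The global dimension of `S`: the supremum of the projective dimensions of all
finite-dimensional `S`-modules. -/
noncomputable def globdim : ℕ :=
  sSup {d | ∃ M : ModuleCat.{0} S, Module.Finite S ↥M ∧ projdim S M = d}

/-- `Ext^n_S(A, B) ≠ 0`. -/
noncomputable def extNe (A B : ModuleCat.{0} S) (n : ℕ) : Prop :=
  Nontrivial ↥(((Ext ℤ (ModuleCat.{0} S) n).obj (Opposite.op A)).obj B)

/-- A simple-preserving duality on `S`: a contravariant, exact, fully faithful,
additive self-functor `D` on the category of finite-dimensional `S`-modules with
`D (D M) ≅ M` and `D (L lam) ≅ L lam` for all `lam`. -/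
structure Duality (Q : QHData S Λ) where
  D : ModuleCat.{0} S → ModuleCat.{0} S
  Dmap : ∀ {A B : ModuleCat.{0} S}, (↥A →ₗ[S] ↥B) → (↥(D B) →ₗ[S] ↥(D A))
  finD : ∀ M : ModuleCat.{0} S, Module.Finite S ↥M → Module.Finite S ↥(D M)
  Did : ∀ A : ModuleCat.{0} S, Module.Finite S ↥A →
    Dmap (LinearMap.id : ↥A →ₗ[S] ↥A) = LinearMap.id
  Dcomp : ∀ {A B C : ModuleCat.{0} S}, Module.Finite S ↥A → Module.Finite S ↥B →
    Module.Finite S ↥C → ∀ (f : ↥A →ₗ[S] ↥B) (g : ↥B →ₗ[S] ↥C),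
      Dmap (g ∘ₗ f) = Dmap f ∘ₗ Dmap g
  Dadd : ∀ {A B : ModuleCat.{0} S}, Module.Finite S ↥A → Module.Finite S ↥B →
    ∀ (f g : ↥A →ₗ[S] ↥B), Dmap (f + g) = Dmap f + Dmap g
  Dfull : ∀ {A B : ModuleCat.{0} S}, Module.Finite S ↥A → Module.Finite S ↥B →
    Function.Bijective (fun f : ↥A →ₗ[S] ↥B => Dmap f)
  Dexact : ∀ {A B C : ModuleCat.{0} S}, Module.Finite S ↥A → Module.Finite S ↥B →
    Module.Finite S ↥C → ∀ (f : ↥A →ₗ[S] ↥B) (g : ↥B →ₗ[S] ↥C),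
      Function.Injective f → Function.Surjective g →
      LinearMap.range f = LinearMap.ker g →
      Function.Injective (Dmap g) ∧ Function.Surjective (Dmap f) ∧
        LinearMap.range (Dmap g) = LinearMap.ker (Dmap f)
  Dinvol : ∀ M : ModuleCat.{0} S, Module.Finite S ↥M → Nonempty (↥(D (D M)) ≃ₗ[S] ↥M)
  DL : ∀ lam, Nonempty (↥(D (Q.L lam)) ≃ₗ[S] ↥(Q.L lam))

/-- Strong property A: `mu < lam` implies `gfd (L mu) < gfd (L lam)`. -/
def StrongPropA (Q : QHData S Λ) : Prop :=
  ∀ mu lam : Λ, mu < lam → gfd S Q (Q.L mu) < gfd S Q (Q.L lam)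

/-- Property A: `mu < lam` implies `gfd (L mu) ≤ gfd (L lam)`. -/
def PropA (Q : QHData S Λ) : Prop :=
  ∀ mu lam : Λ, mu < lam → gfd S Q (Q.L mu) ≤ gfd S Q (Q.L lam)

/-- Property B: `mu < lam` implies `wfd (∇ mu) ≤ wfd (∇ lam)`. -/
def PropB (Q : QHData S Λ) : Prop :=
  ∀ mu lam : Λ, mu < lam → wfd S Q (Q.costd mu) ≤ wfd S Q (Q.costd lam)

/-- Property C: `wfd (∇ lam) = gfd S - inj (∇ lam)` for all `lam`. -/
def PropC (Q : QHData S Λ) : Prop :=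
  ∀ lam : Λ, wfd S Q (Q.costd lam) = gfdAlg S Q - injdim S (Q.costd lam)

/-- Property D: `wfd (∇ lam) = wfd (L lam)` for all `lam`. -/
def PropD (Q : QHData S Λ) : Prop :=
  ∀ lam : Λ, wfd S Q (Q.costd lam) = wfd S Q (Q.L lam)

/-- Property E: `mu < lam` implies `inj (∇ mu) ≥ inj (∇ lam)`. -/
def PropE (Q : QHData S Λ) : Prop :=
  ∀ mu lam : Λ, mu < lam → injdim S (Q.costd lam) ≤ injdim S (Q.costd mu)

/-- The partial order is minimal for the quasi-hereditary structure: whenever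
`mu < lam` are adjacent, `L mu` is a composition factor of `Δ lam` or of `∇ lam`. -/
def MinimalOrder (Q : QHData S Λ) : Prop :=
  ∀ mu lam : Λ, mu < lam → (¬ ∃ nu, mu < nu ∧ nu < lam) →
    IsCompFactor S (Q.L mu) (Q.std lam) ∨ IsCompFactor S (Q.L mu) (Q.costd lam)

/-- `S` is connected (indecomposable as an algebra, i.e. one block): the only
central idempotents are `0` and `1`. -/
def ConnectedRing : Prop :=
  ∀ c : S, c * c = c → (∀ s : S, c * s = s * c) → c = 0 ∨ c = 1

/-- A tilting module: a module in `F(Δ) ∩ F(∇)`. -/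
def IsTilting (Q : QHData S Λ) (T : ModuleCat.{0} S) : Prop :=
  InStdFilt S Q T ∧ InCostdFilt S Q T

/-- The indecomposable tilting module `T(lam)`: an indecomposable tilting module in
which `L lam` occurs exactly once and all other composition factors `L mu` have
`mu < lam`. -/
def IsIndecTilting (Q : QHData S Λ) (lam : Λ) (T : ModuleCat.{0} S) : Prop :=
  IsTilting S Q T ∧ Nontrivial ↥T ∧
    (∀ A B : Submodule S ↥T, IsCompl A B → A = ⊥ ∨ B = ⊥) ∧
    CompFactorMult S (Q.L lam) T 1 ∧
    ∀ mu, IsCompFactor S (Q.L mu) T → mu = lam ∨ mu < lam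

/-- A full tilting module: a (finite-dimensional) tilting module having every
indecomposable tilting module as a direct summand. -/
def IsFullTilting (Q : QHData S Λ) (T : ModuleCat.{0} S) : Prop :=
  IsTilting S Q T ∧ Module.Finite S ↥T ∧
    ∀ (lam : Λ) (Tl : ModuleCat.{0} S), IsIndecTilting S Q lam Tl →
      ∃ Cc : ModuleCat.{0} S, Nonempty (↥T ≃ₗ[S] (↥Tl × ↥Cc))

/-- The Ringel dual ring `S' = End_S(T)^op`. -/
abbrev RingelDualRing (T : ModuleCat.{0} S) : Type := (Module.End S ↥T)ᵐᵒᵖ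

/-- `Hom_S(T, X)` is a module over `S' = End_S(T)^op` via `f • φ = φ ∘ f`. -/
instance homTModule (T X : ModuleCat.{0} S) :
    Module (RingelDualRing S T) (↥T →ₗ[S] ↥X) where
  smul a φ := φ ∘ₗ a.unop
  one_smul φ := rfl
  mul_smul a b φ := rfl
  smul_zero a := rfl
  smul_add a φ ψ := rfl
  add_smul a b φ := by
    ext x
    show φ ((a.unop + b.unop) x) = φ (a.unop x) + φ (b.unop x)
    rw [LinearMap.add_apply, map_add]
  zero_smul φ := by
    ext x
    show φ ((0 : Module.End S ↥T) x) = 0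
    rw [LinearMap.zero_apply, map_zero]

/-- The `S'`-module `Hom_S(T, X)`, i.e. the image of `X` under the functor
`F = Hom_S(T, -)`. -/
noncomputable def homTMod (T X : ModuleCat.{0} S) :
    ModuleCat.{0} (RingelDualRing S T) :=
  ModuleCat.of (RingelDualRing S T) (↥T →ₗ[S] ↥X)

/-- `Q'` is a Ringel dual quasi-hereditary structure for `(Q, T)`:
`T` is a full tilting module, `Q'` is a quasi-hereditary structure on
`S' = End_S(T)^op` for the opposite poset, and its standard modules are
`Δ'(lam) = Hom_S(T, ∇(lam))`. -/
def IsRingelDualData (Q : QHData S Λ) (T : ModuleCat.{0} S)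
    (Q' : QHData (RingelDualRing S T) Λᵒᵈ) : Prop :=
  IsFullTilting S Q T ∧
    ∀ lam : Λ, Nonempty
      (↥(Q'.std (OrderDual.toDual lam)) ≃ₗ[RingelDualRing S T]
        (↥T →ₗ[S] ↥(Q.costd lam)))

/-- `0 → T_d → ⋯ → T_0 → M → 0` exact with all `T_i` tilting modules. -/
def TiltResLE (Q : QHData S Λ) (M : ModuleCat.{0} S) (d : ℕ) : Prop :=
  ∃ (N : Fin (d + 2) → ModuleCat.{0} S)
    (f : ∀ i : Fin (d + 1), ↥(N i.castSucc) →ₗ[S] ↥(N i.succ)),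
    IsExactSeq S d N f ∧ N (Fin.last (d + 1)) = M ∧
    ∀ i : Fin (d + 1), IsTilting S Q (N i.castSucc)

/-- An idempotent `e` is primitive if it is nonzero and is not the sum of two
nonzero orthogonal idempotents. -/
def IsPrimitiveIdempotent (e : S) : Prop :=
  e * e = e ∧ e ≠ 0 ∧ ∀ a b : S, a * a = a → b * b = b → a * b = 0 → b * a = 0 →
    e = a + b → a = 0 ∨ b = 0

/-- The additive subgroup `e•M = {m | e • m = m}` of `M` (for `e` idempotent). -/
def cornerSet (eG : S) (M : ModuleCat.{0} S) : AddSubgroup ↥M where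
  carrier := {m | eG • m = m}
  add_mem' := by
    intro a b ha hb
    simp only [Set.mem_setOf_eq] at *
    rw [smul_add, ha, hb]
  zero_mem' := by
    simp only [Set.mem_setOf_eq]
    rw [smul_zero]
  neg_mem' := by
    intro a ha
    simp only [Set.mem_setOf_eq] at *
    rw [smul_neg, ha]

/-- The `R`-module structure on `e•M`, where `ι : R → S` identifies `R` with the
corner ring `eSe` (as a non-unital ring, with `ι 1 = e`). -/
def cornerModuleStructure (R : Type) [Ring R] (ι : R →ₙ+* S) (eG : S)
    (hone : ι 1 = eG) (hrange : ∀ r : R, eG * ι r * eG = ι r)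
    (M : ModuleCat.{0} S) : Module R ↥(cornerSet S eG M) where
  smul r m := ⟨ι r • (m : ↥M), by
    have hm : eG • (m : ↥M) = (m : ↥M) := m.2
    show eG • (ι r • (m : ↥M)) = ι r • (m : ↥M)
    have h : eG • (ι r • (m : ↥M)) = (eG * ι r * eG) • (m : ↥M) := by
      rw [mul_assoc, mul_smul, mul_smul, hm]
    rw [h, hrange]⟩
  one_smul m := by
    apply Subtype.ext
    show ι 1 • (m : ↥M) = (m : ↥M)
    rw [hone]
    exact m.2
  mul_smul r s m := by
    apply Subtype.ext
    show ι (r * s) • (m : ↥M) = ι r • (ι s • (m : ↥M))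
    rw [map_mul, mul_smul]
  smul_zero r := by
    apply Subtype.ext
    show ι r • (0 : ↥M) = 0
    rw [smul_zero]
  smul_add r m n := by
    apply Subtype.ext
    show ι r • ((m : ↥M) + (n : ↥M)) = ι r • (m : ↥M) + ι r • (n : ↥M)
    rw [smul_add]
  add_smul r s m := by
    apply Subtype.ext
    show ι (r + s) • (m : ↥M) = ι r • (m : ↥M) + ι s • (m : ↥M)
    rw [map_add, add_smul]
  zero_smul m := by
    apply Subtype.ext
    show ι 0 • (m : ↥M) = 0
    rw [map_zero, zero_smul]

/-- The `R`-module `e•M`, where `R ≅ eSe` via `ι`. -/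
noncomputable def cornerMod (R : Type) [Ring R] (ι : R →ₙ+* S) (eG : S)
    (hone : ι 1 = eG) (hrange : ∀ r : R, eG * ι r * eG = ι r)
    (M : ModuleCat.{0} S) : ModuleCat.{0} R :=
  @ModuleCat.of R _ ↥(cornerSet S eG M) _
    (cornerModuleStructure S R ι eG hone hrange M)

end QHPaper

namespace QHAux
open QHPaper

variable {S : Type} [Ring S]

/-- `0 → A → B → C → 0` is a short exact sequence with maps `f`, `g`. -/
def Ex {A B C : ModuleCat.{0} S} (f : ↥A →ₗ[S] ↥B) (g : ↥B →ₗ[S] ↥C) : Prop :=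
  Function.Injective f ∧ Function.Surjective g ∧ ∀ b, g b = 0 ↔ ∃ a, f a = b

/-- There is a short exact sequence `0 → A → B → C → 0`. -/
def SES (A B C : ModuleCat.{0} S) : Prop :=
  ∃ (f : ↥A →ₗ[S] ↥B) (g : ↥B →ₗ[S] ↥C), Ex f g

theorem SES.congr {A B C A' B' C' : ModuleCat.{0} S} (h : SES A B C) (a : ↥A ≃ₗ[S] ↥A')
    (b : ↥B ≃ₗ[S] ↥B') (c : ↥C ≃ₗ[S] ↥C') : SES A' B' C' := by
  obtain ⟨f, g, hf, hg, hex⟩ := h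
  refine ⟨b.toLinearMap ∘ₗ f ∘ₗ a.symm.toLinearMap, c.toLinearMap ∘ₗ g ∘ₗ b.symm.toLinearMap,
    b.injective.comp (hf.comp a.symm.injective), c.surjective.comp (hg.comp b.symm.surjective), ?_⟩
  intro x
  have := hex (b.symm x)
  simp only [LinearMap.comp_apply, LinearEquiv.coe_coe, LinearEquiv.map_eq_zero_iff]
  rw [this]
  constructor
  · rintro ⟨y, hy⟩
    exact ⟨a y, by simp [hy]⟩
  · rintro ⟨y, hy⟩
    exact ⟨a.symm y, by rw [← hy]; simp⟩

theorem ses_ker {B C : ModuleCat.{0} S} (g : ↥B →ₗ[S] ↥C) (hg : Function.Surjective g) :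
    SES (ModuleCat.of S (LinearMap.ker g)) B C :=
  ⟨(LinearMap.ker g).subtype, g, Subtype.val_injective, hg, fun b =>
    ⟨fun h => ⟨⟨b, h⟩, rfl⟩, by rintro ⟨⟨a, ha⟩, rfl⟩; exact ha⟩⟩

theorem ses_quot {B : ModuleCat.{0} S} (N : Submodule S ↥B) :
    SES (ModuleCat.of S N) B (ModuleCat.of S (↥B ⧸ N)) :=
  ⟨N.subtype, N.mkQ, Subtype.val_injective, N.mkQ_surjective, fun b =>
    ⟨fun h => ⟨⟨b, by simpa using h⟩, rfl⟩, by rintro ⟨⟨a, ha⟩, rfl⟩; simpa using ha⟩⟩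

theorem ses_coker {A B : ModuleCat.{0} S} (f : ↥A →ₗ[S] ↥B) (hf : Function.Injective f) :
    SES A B (ModuleCat.of S (↥B ⧸ LinearMap.range f)) :=
  (ses_quot (LinearMap.range f)).congr (LinearEquiv.ofInjective f hf).symm
    (LinearEquiv.refl _ _) (LinearEquiv.refl _ _)

theorem SES.equiv_ker {A B C : ModuleCat.{0} S} {f : ↥A →ₗ[S] ↥B} {g : ↥B →ₗ[S] ↥C}
    (h : Ex f g) : Nonempty (↥A ≃ₗ[S] LinearMap.ker g) := by
  have hr : LinearMap.range f = LinearMap.ker g := by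
    ext x; simp only [LinearMap.mem_range, LinearMap.mem_ker]; exact (h.2.2 x).symm
  exact ⟨(LinearEquiv.ofInjective f h.1).trans (LinearEquiv.ofEq _ _ hr)⟩

/-- the zero module -/
abbrev Z0 : ModuleCat.{0} S := ModuleCat.of S PUnit

theorem ses_zero_left (M : ModuleCat.{0} S) : SES (Z0 : ModuleCat.{0} S) M M :=
  ⟨0, LinearMap.id, fun _ _ _ => Subsingleton.elim _ _, Function.surjective_id, fun b =>
    ⟨fun h => ⟨0, by simpa using h.symm⟩, by rintro ⟨a, rfl⟩; simp⟩⟩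

theorem ses_zero_right (M : ModuleCat.{0} S) : SES M M (Z0 : ModuleCat.{0} S) :=
  ⟨LinearMap.id, 0, Function.injective_id, fun x => ⟨0, Subsingleton.elim _ _⟩, fun b =>
    ⟨fun h => ⟨b, rfl⟩, by rintro ⟨a, rfl⟩; simp⟩⟩

theorem ses_prod (A B : ModuleCat.{0} S) : SES A (ModuleCat.of S (↥A × ↥B)) B :=
  ⟨LinearMap.inl S A B, LinearMap.snd S A B, LinearMap.inl_injective, LinearMap.snd_surjective,
    by
      rintro ⟨a, b⟩
      constructor
      · intro h; exact ⟨a, by simpa using (show b = 0 from h).symm⟩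
      · rintro ⟨a', h⟩; simp at h; exact h.2.symm⟩

/-- pulling back a submodule of the quotient -/
theorem SES.pre {A B C C' F : ModuleCat.{0} S} (h : SES A B C) (h' : SES C' C F) :
    ∃ B' : ModuleCat.{0} S, SES A B' C' ∧ SES B' B F := by
  obtain ⟨f, g, hf, hg, hex⟩ := h
  obtain ⟨u, v, hu, hv, huv⟩ := h'
  refine ⟨ModuleCat.of S (LinearMap.ker (v ∘ₗ g)), ?_, ses_ker _ (hv.comp hg)⟩
  have hE : ∀ x : LinearMap.ker (v ∘ₗ g), ∃ c, u c = g x.1 := fun x => (huv _).1 x.2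
  let e := LinearEquiv.ofInjective u hu
  have hr : ∀ x : LinearMap.ker (v ∘ₗ g), g x.1 ∈ LinearMap.range u := fun x => hE x
  let g' : LinearMap.ker (v ∘ₗ g) →ₗ[S] ↥C' :=
    e.symm.toLinearMap ∘ₗ (LinearMap.codRestrict (LinearMap.range u)
      (g ∘ₗ (LinearMap.ker (v ∘ₗ g)).subtype) hr)
  have hg' : ∀ x, u (g' x) = g x.1 := by
    intro x
    have : e (g' x) = ⟨g x.1, hr x⟩ := by simp [g']; rfl
    exact congrArg Subtype.val this
  let f' : ↥A →ₗ[S] LinearMap.ker (v ∘ₗ g) := LinearMap.codRestrict _ f (fun a => by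
    have : g (f a) = 0 := (hex _).2 ⟨a, rfl⟩
    simp [this])
  refine ⟨f', g', ?_, ?_, ?_⟩
  · intro a b hab; exact hf (congrArg Subtype.val hab)
  · intro c
    obtain ⟨b, hb⟩ := hg (u c)
    refine ⟨⟨b, ?_⟩, hu ?_⟩
    · simp only [LinearMap.mem_ker, LinearMap.comp_apply, hb]; exact (huv _).2 ⟨c, rfl⟩
    · rw [hg']; exact hb
  · intro b
    have h1 : g' b = 0 ↔ g b.1 = 0 := by
      rw [← hg' b]; constructor
      · intro h; simp [h]
      · intro h; exact hu (by simpa using h)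
    rw [h1, hex]
    constructor
    · rintro ⟨a, ha⟩; exact ⟨a, Subtype.ext ha⟩
    · rintro ⟨a, ha⟩; exact ⟨a, congrArg Subtype.val ha⟩

/-- third isomorphism theorem -/
theorem SES.third {A B C E F : ModuleCat.{0} S} (h : SES A B C) (h' : SES B E F) :
    ∃ G : ModuleCat.{0} S, SES A E G ∧ SES C G F := by
  obtain ⟨f, g, hf, hg, hex⟩ := h
  obtain ⟨u, v, hu, hv, huv⟩ := h'
  refine ⟨ModuleCat.of S (↥E ⧸ LinearMap.range (u ∘ₗ f)), ses_coker _ (hu.comp hf), ?_⟩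
  have hle : LinearMap.range (u ∘ₗ f) ≤ LinearMap.ker v := by
    rintro _ ⟨a, rfl⟩; exact (huv _).2 ⟨f a, rfl⟩
  let v' : (↥E ⧸ LinearMap.range (u ∘ₗ f)) →ₗ[S] ↥F := Submodule.liftQ _ v hle
  have hv' : Function.Surjective v' := fun y => by
    obtain ⟨x, hx⟩ := hv y
    exact ⟨Submodule.Quotient.mk x, hx⟩
  have hk : LinearMap.ker g ≤ LinearMap.ker ((LinearMap.range (u ∘ₗ f)).mkQ ∘ₗ u) := by
    intro b hb
    obtain ⟨a, rfl⟩ := (hex b).1 hb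
    simp only [LinearMap.mem_ker, LinearMap.comp_apply, Submodule.mkQ_apply,
      Submodule.Quotient.mk_eq_zero]
    exact ⟨a, rfl⟩
  let w0 : (↥B ⧸ LinearMap.ker g) →ₗ[S] (↥E ⧸ LinearMap.range (u ∘ₗ f)) := Submodule.liftQ _ _ hk
  let e := g.quotKerEquivOfSurjective hg
  have he : ∀ b, e.symm (g b) = Submodule.Quotient.mk b := fun b => by
    rw [LinearEquiv.symm_apply_eq]; rfl
  let w : ↥C →ₗ[S] (↥E ⧸ LinearMap.range (u ∘ₗ f)) := w0 ∘ₗ e.symm.toLinearMap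
  have hw : ∀ b, w (g b) = Submodule.Quotient.mk (u b) := fun b => by
    show w0 (e.symm (g b)) = _
    rw [he]; rfl
  refine ⟨w, v', ?_, hv', ?_⟩
  · rw [injective_iff_map_eq_zero]
    intro c hc
    obtain ⟨b, rfl⟩ := hg c
    rw [hw, Submodule.Quotient.mk_eq_zero] at hc
    obtain ⟨a, ha⟩ := hc
    exact (hex b).2 ⟨a, hu ha⟩
  · intro x
    obtain ⟨x, rfl⟩ := Submodule.Quotient.mk_surjective _ x
    have : v' (Submodule.Quotient.mk x) = v x := rfl
    rw [this, huv]
    constructor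
    · rintro ⟨b, rfl⟩; exact ⟨g b, hw b⟩
    · rintro ⟨c, hc⟩
      obtain ⟨b, rfl⟩ := hg c
      rw [hw, Submodule.Quotient.eq] at hc
      obtain ⟨a, ha⟩ := hc
      refine ⟨b - f a, ?_⟩
      simp only [LinearMap.comp_apply] at ha
      rw [map_sub, ha]; abel

/-- pullback of two surjections -/
theorem SES.pullback {A B C K F : ModuleCat.{0} S} (h : SES A B C) (h' : SES K F C) :
    ∃ X : ModuleCat.{0} S, SES A X F ∧ SES K X B := by
  obtain ⟨f, g, hf, hg, hex⟩ := h
  obtain ⟨u, v, hu, hv, huv⟩ := h'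
  let X : Submodule S (↥B × ↥F) := LinearMap.ker (g ∘ₗ LinearMap.fst S B F - v ∘ₗ LinearMap.snd S B F)
  have hX : ∀ b x, (b, x) ∈ X ↔ g b = v x := fun b x => by simp [X, sub_eq_zero]
  refine ⟨ModuleCat.of S X, ⟨LinearMap.codRestrict X (LinearMap.inl S B F ∘ₗ f) ?_,
    LinearMap.snd S B F ∘ₗ X.subtype, ?_, ?_, ?_⟩, ⟨LinearMap.codRestrict X (LinearMap.inr S B F ∘ₗ u) ?_,
    LinearMap.fst S B F ∘ₗ X.subtype, ?_, ?_, ?_⟩⟩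
  · intro a; exact (hX (f a) 0).2 (by rw [map_zero]; exact (hex _).2 ⟨a, rfl⟩)
  · intro a b hab
    have := congrArg (fun z : X => z.1.1) hab
    exact hf this
  · intro x
    obtain ⟨b, hb⟩ := hg (v x)
    exact ⟨⟨(b, x), (hX _ _).2 hb⟩, rfl⟩
  · rintro ⟨⟨b, x⟩, hm⟩
    have hm' := (hX _ _).1 hm
    constructor
    · intro (h : x = 0)
      subst h
      obtain ⟨a, rfl⟩ := (hex b).1 (by rw [hm', map_zero])
      exact ⟨a, rfl⟩
    · rintro ⟨a, ha⟩
      exact (congrArg (fun z : X => z.1.2) ha).symm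
  · intro a; exact (hX 0 (u a)).2 (by rw [map_zero]; exact ((huv _).2 ⟨a, rfl⟩).symm)
  · intro a b hab
    have := congrArg (fun z : X => z.1.2) hab
    exact hu this
  · intro x
    obtain ⟨b, hb⟩ := hv (g x)
    exact ⟨⟨(x, b), (hX _ _).2 hb.symm⟩, rfl⟩
  · rintro ⟨⟨b, x⟩, hm⟩
    have hm' := (hX _ _).1 hm
    constructor
    · intro (h : b = 0)
      subst h
      obtain ⟨a, rfl⟩ := (huv x).1 (by rw [← hm', map_zero])
      exact ⟨a, rfl⟩
    · rintro ⟨a, ha⟩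
      exact (congrArg (fun z : X => z.1.1) ha).symm

/-- horseshoe-type construction -/
theorem SES.horse {A B C K F P : ModuleCat.{0} S} (h : SES A B C) (h' : SES K F A)
    (b : ↥P →ₗ[S] ↥B) (hb : Function.Surjective b) :
    ∃ Z Kc : ModuleCat.{0} S, SES Z (ModuleCat.of S (↥F × ↥P)) B ∧ SES K Z Kc ∧ SES Kc P C := by
  obtain ⟨f, g, hf, hg, hex⟩ := h
  obtain ⟨u, v, hu, hv, huv⟩ := h'
  let t : (↥F × ↥P) →ₗ[S] ↥B := (f ∘ₗ v).coprod b
  have ht : Function.Surjective t := fun y => by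
    obtain ⟨x, hx⟩ := hb y
    exact ⟨(0, x), by simp [t, hx]⟩
  refine ⟨ModuleCat.of S (LinearMap.ker t), ModuleCat.of S (LinearMap.ker (g ∘ₗ b)),
    ses_ker (B := ModuleCat.of S (↥F × ↥P)) t ht, ?_, ses_ker _ (hg.comp hb)⟩
  have hgf : ∀ a, g (f a) = 0 := fun a => (hex _).2 ⟨a, rfl⟩
  have hvu : ∀ a, v (u a) = 0 := fun a => (huv _).2 ⟨a, rfl⟩
  have htm : ∀ x p, (x, p) ∈ LinearMap.ker t ↔ f (v x) + b p = 0 := fun x p => by simp [t]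
  refine ⟨LinearMap.codRestrict _ (LinearMap.inl S F P ∘ₗ u) ?_,
    LinearMap.codRestrict _ (LinearMap.snd S F P ∘ₗ (LinearMap.ker t).subtype) ?_, ?_, ?_, ?_⟩
  · intro c; exact (htm _ _).2 (by simp [hvu])
  · rintro ⟨⟨x, p⟩, hm⟩
    have := congrArg g ((htm _ _).1 hm)
    rw [map_add, hgf, zero_add, map_zero] at this
    exact this
  · intro a c hac
    have := congrArg (fun z : LinearMap.ker t => z.1.1) hac
    exact hu this
  · rintro ⟨p, hp⟩
    obtain ⟨a, ha⟩ := (hex (b p)).1 hp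
    obtain ⟨x, rfl⟩ := hv a
    exact ⟨⟨(-x, p), (htm _ _).2 (by simp [ha])⟩, rfl⟩
  · rintro ⟨⟨x, p⟩, hm⟩
    have hm' := (htm _ _).1 hm
    constructor
    · intro h0
      have h0' : p = 0 := congrArg Subtype.val h0
      subst h0'
      rw [map_zero, add_zero] at hm'
      obtain ⟨c, rfl⟩ := (huv x).1 (hf (by rw [hm', map_zero]))
      exact ⟨c, rfl⟩
    · rintro ⟨c, hc⟩
      apply Subtype.ext
      exact (congrArg (fun z : LinearMap.ker t => z.1.2) hc).symm

variable {Λ : Type}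

/-- Filtrations with sections in a family `X`, with multiset of section labels. -/
inductive Filt (X : Λ → ModuleCat.{0} S) : Multiset Λ → ModuleCat.{0} S → Prop
  | zero (M : ModuleCat.{0} S) (h : Subsingleton ↥M) : Filt X 0 M
  | cons (m : Λ) (s : Multiset Λ) (M' M : ModuleCat.{0} S) (h : SES M' M (X m))
      (h' : Filt X s M') : Filt X (m ::ₘ s) M

theorem Filt.congr {X : Λ → ModuleCat.{0} S} {s : Multiset Λ} {M N : ModuleCat.{0} S}
    (h : Filt X s M) (e : ↥M ≃ₗ[S] ↥N) : Filt X s N := by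
  cases h with
  | zero _ h => exact .zero _ e.symm.injective.subsingleton
  | cons m s M' _ h h' => exact .cons m s M' N (h.congr (.refl _ _) e (.refl _ _)) h'

theorem Filt.single (X : Λ → ModuleCat.{0} S) (m : Λ) : Filt X {m} (X m) :=
  .cons m 0 Z0 _ (ses_zero_left _) (.zero _ inferInstance)

theorem SES.equiv_of_right_zero {A B C : ModuleCat.{0} S} (h : SES A B C) (hC : Subsingleton ↥C) :
    Nonempty (↥A ≃ₗ[S] ↥B) := by
  obtain ⟨f, g, hf, hg, hex⟩ := h
  exact ⟨LinearEquiv.ofBijective f ⟨hf, fun b => (hex b).1 (Subsingleton.elim _ _)⟩⟩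

theorem SES.equiv_of_left_zero {A B C : ModuleCat.{0} S} (h : SES A B C) (hA : Subsingleton ↥A) :
    Nonempty (↥B ≃ₗ[S] ↥C) := by
  obtain ⟨f, g, hf, hg, hex⟩ := h
  refine ⟨LinearEquiv.ofBijective g ⟨?_, hg⟩⟩
  rw [injective_iff_map_eq_zero]
  intro b hb
  obtain ⟨a, rfl⟩ := (hex b).1 hb
  rw [Subsingleton.elim a 0, map_zero]

theorem Filt.ses {X : Λ → ModuleCat.{0} S} {s t : Multiset Λ} {A B C : ModuleCat.{0} S}
    (hA : Filt X s A) (hC : Filt X t C) (h : SES A B C) : Filt X (t + s) B := by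
  induction hC generalizing B with
  | zero C hC =>
    obtain ⟨e⟩ := h.equiv_of_right_zero hC
    simpa using hA.congr e
  | cons m t C' C hC _ ih =>
    obtain ⟨B', h1, h2⟩ := h.pre hC
    rw [Multiset.cons_add]
    exact .cons m _ B' B h2 (ih h1)

theorem Filt.map {X Y : Λ → ModuleCat.{0} S} (e : ∀ m, Nonempty (↥(X m) ≃ₗ[S] ↥(Y m)))
    {s : Multiset Λ} {M : ModuleCat.{0} S} (h : Filt X s M) : Filt Y s M := by
  induction h with
  | zero M h => exact .zero M h
  | cons m s M' M h _ ih =>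
    exact .cons m s M' M (h.congr (.refl _ _) (.refl _ _) (e m).some) ih

theorem SES.finite_mid {A B C : ModuleCat.{0} S} (h : SES A B C) (hA : Module.Finite S ↥A)
    (hC : Module.Finite S ↥C) : Module.Finite S ↥B := by
  obtain ⟨f, g, hf, hg, hex⟩ := h
  have : Module.Finite S (LinearMap.range f) := Module.Finite.range f
  have e : LinearMap.range f = LinearMap.ker g := by
    ext x; exact (hex x).symm
  have e2 := g.quotKerEquivOfSurjective hg
  rw [← e] at e2
  have : Module.Finite S (↥B ⧸ LinearMap.range f) := Module.Finite.equiv e2.symm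
  exact Module.Finite.of_submodule_quotient (LinearMap.range f)

theorem SES.finite_right {A B C : ModuleCat.{0} S} (h : SES A B C) (hB : Module.Finite S ↥B) :
    Module.Finite S ↥C := by
  obtain ⟨f, g, hf, hg, hex⟩ := h
  exact Module.Finite.of_surjective g hg

theorem SES.finite_left [IsNoetherianRing S] {A B C : ModuleCat.{0} S} (h : SES A B C)
    (hB : Module.Finite S ↥B) : Module.Finite S ↥A := by
  obtain ⟨f, g, hf, hg, hex⟩ := h
  exact Module.Finite.of_injective f hf

theorem Filt.finite {X : Λ → ModuleCat.{0} S} (hX : ∀ m, Module.Finite S ↥(X m))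
    {s : Multiset Λ} {M : ModuleCat.{0} S} (h : Filt X s M) : Module.Finite S ↥M := by
  induction h with
  | zero M h => exact inferInstance
  | cons m s M' M h _ ih => exact h.finite_mid ih (hX m)

/-- filtration in the sense of the statement gives `Filt` -/
theorem filt_of_sections (X : Λ → ModuleCat.{0} S) (M : ModuleCat.{0} S) (n : ℕ)
    (f : Fin (n + 1) → Submodule S ↥M) (g : Fin n → Λ) (hm : Monotone f) (h0 : f 0 = ⊥)
    (hs : ∀ i : Fin n, Nonempty ((subquot S (f i.castSucc) (f i.succ)) ≃ₗ[S] ↥(X (g i)))) :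
    Filt X (Finset.univ.val.map g) (ModuleCat.of S (f (Fin.last n))) := by
  induction n with
  | zero =>
    have : Subsingleton (f (Fin.last 0)) := by
      have : f (Fin.last 0) = ⊥ := h0
      rw [this]; infer_instance
    exact .zero _ this
  | succ n ih =>
    have ih' := ih (fun i => f i.castSucc) (fun i => g i.castSucc)
      (fun i j hij => hm (Fin.castSucc_le_castSucc_iff.2 hij)) h0 (fun i => hs i.castSucc)
    rw [Fin.univ_castSuccEmb]
    simp only [Finset.cons_val, Finset.map_val, Multiset.map_cons, Multiset.map_map]
    refine .cons _ _ (ModuleCat.of S (f (Fin.last n).castSucc)) _ ?_ ih'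
    have hle : f (Fin.last n).castSucc ≤ f (Fin.last (n+1)) := hm (Fin.le_last _)
    refine (ses_quot (B := ModuleCat.of S (f (Fin.last (n+1))))
      (Submodule.comap (f (Fin.last (n+1))).subtype (f (Fin.last n).castSucc))).congr
      (Submodule.comapSubtypeEquivOfLe hle) (.refl _ _) (hs (Fin.last n)).some

theorem filt_of_hasFiltration (X : Λ → ModuleCat.{0} S) (M : ModuleCat.{0} S) (n : ℕ)
    (f : Fin (n + 1) → Submodule S ↥M) (g : Fin n → Λ)
    (h : HasFiltrationWithSections S M n f (fun i => X (g i))) :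
    Filt X (Finset.univ.val.map g) M := by
  obtain ⟨hm, h0, h1, hs⟩ := h
  have := filt_of_sections X M n f g hm h0 hs
  rw [h1] at this
  exact this.congr Submodule.topEquiv

theorem subquot_map {M N : ModuleCat.{0} S} (u : ↥M →ₗ[S] ↥N) (hu : Function.Injective u)
    (A B : Submodule S ↥M) :
    Nonempty (subquot S A B ≃ₗ[S] subquot S (A.map u) (B.map u)) := by
  refine ⟨Submodule.Quotient.equiv _ _ (Submodule.equivMapOfInjective u hu B) ?_⟩
  ext ⟨x, hx⟩
  simp only [Submodule.mem_map, Submodule.mem_comap, Submodule.subtype_apply]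
  constructor
  · rintro ⟨⟨y, hy⟩, hyA, h⟩
    exact ⟨y, hyA, congrArg Subtype.val h⟩
  · rintro ⟨y, hyA, rfl⟩
    obtain ⟨z, hz, hzy⟩ := hx
    have := hu hzy
    subst this
    exact ⟨⟨z, hz⟩, hyA, rfl⟩

theorem hasFiltration_of_filt {X : Λ → ModuleCat.{0} S} {s : Multiset Λ} {M : ModuleCat.{0} S}
    (h : Filt X s M) : ∃ (n : ℕ) (f : Fin (n + 1) → Submodule S ↥M) (g : Fin n → Λ),
    HasFiltrationWithSections S M n f (fun i => X (g i)) := by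
  induction h with
  | zero M h =>
    exact ⟨0, fun _ => ⊥, Fin.elim0, fun _ _ _ => le_rfl, rfl, Subsingleton.elim _ _,
      fun i => i.elim0⟩
  | cons m s M' M h _ ih =>
    obtain ⟨n, f, g, hm, h0, h1, hs⟩ := ih
    obtain ⟨u, v, hu, hv, huv⟩ := h
    refine ⟨n + 1, Fin.snoc (α := fun _ => Submodule S ↥M) (fun i => (f i).map u) ⊤,
      Fin.snoc (α := fun _ => Λ) g m, ?_, ?_, ?_, ?_⟩
    · intro i j
      induction j using Fin.lastCases with
      | last => intro _; simp
      | cast j =>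
        induction i using Fin.lastCases with
        | last => intro hij; exact absurd hij (not_le.2 (Fin.castSucc_lt_last j))
        | cast i =>
          intro hij
          simp only [Fin.snoc_castSucc]
          exact Submodule.map_mono (hm hij)
    · have : (0 : Fin (n + 1 + 1)) = (0 : Fin (n + 1)).castSucc := rfl
      rw [this, Fin.snoc_castSucc, h0, Submodule.map_bot]
    · rw [Fin.snoc_last]
    · intro i
      induction i using Fin.lastCases with
      | last =>
        rw [Fin.snoc_castSucc, Fin.succ_last, Fin.snoc_last]
        beta_reduce
        rw [Fin.snoc_last, h1, Submodule.map_top]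
        have hr : Submodule.comap (⊤ : Submodule S ↥M).subtype (LinearMap.range u) =
            LinearMap.ker (v ∘ₗ (⊤ : Submodule S ↥M).subtype) := by
          ext ⟨x, hx⟩
          simp only [Submodule.mem_comap, LinearMap.mem_ker]
          exact (huv x).symm
        refine ⟨(Submodule.quotEquivOfEq _ _ hr).trans
          (LinearMap.quotKerEquivOfSurjective _ ?_)⟩
        intro y
        obtain ⟨x, hx⟩ := hv y
        exact ⟨⟨x, trivial⟩, hx⟩
      | cast i =>
        rw [Fin.snoc_castSucc, Fin.succ_castSucc, Fin.snoc_castSucc]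
        beta_reduce
        rw [Fin.snoc_castSucc]
        exact ⟨(subquot_map u hu _ _).some.symm.trans (hs i).some⟩

end QHAux

namespace QHAux
open QHPaper

variable {S : Type} [Ring S] {Λ : Type} [Fintype Λ] [PartialOrder Λ] (Q : QHData S Λ)

instance L_simple (m : Λ) : IsSimpleModule S ↥(Q.L m) := Q.simpleL m

instance L_nontrivial (m : Λ) : Nontrivial ↥(Q.L m) := IsSimpleModule.nontrivial S _

theorem P_top (m : Λ) : ∃ p : ↥(Q.P m) →ₗ[S] ↥(Q.L m), Function.Surjective p ∧
    ∀ N : Submodule S ↥(Q.P m), N ≠ ⊤ → N ≤ LinearMap.ker p := by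
  obtain ⟨-, p, hp, hN⟩ := Q.projCover m
  refine ⟨p, hp, fun N hne => ?_⟩
  have := Q.simpleL m
  rcases eq_bot_or_eq_top (N.map p) with h | h
  · intro x hx
    have : p x ∈ N.map p := ⟨x, hx, rfl⟩
    rw [h] at this
    exact this
  · refine absurd (hN N ?_) hne
    rw [← Submodule.comap_map_eq, h, Submodule.comap_top]

instance P_proj (m : Λ) : Module.Projective S ↥(Q.P m) := (Q.projCover m).1

theorem P_finite (m : Λ) : Module.Finite S ↥(Q.P m) := by
  obtain ⟨p, hp, hN⟩ := P_top Q m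
  have := Q.simpleL m
  obtain ⟨y, hy⟩ := exists_ne (0 : ↥(Q.L m))
  obtain ⟨x, rfl⟩ := hp y
  have : Submodule.span S {x} = ⊤ := by
    by_contra h
    exact hy (hN _ h (Submodule.mem_span_singleton_self x))
  exact ⟨⟨{x}, by simpa using this⟩⟩

/-- `L m` occurs in `M`, expressed with the projective cover. -/
def CF (m : Λ) (M : ModuleCat.{0} S) : Prop := ∃ h : ↥(Q.P m) →ₗ[S] ↥M, h ≠ 0

variable {Q}

theorem equiv_of_P_simple {m : Λ} {X : ModuleCat.{0} S} (hX : IsSimpleModule S ↥X)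
    (h : ↥(Q.P m) →ₗ[S] ↥X) (hne : h ≠ 0) : Nonempty (↥X ≃ₗ[S] ↥(Q.L m)) := by
  obtain ⟨p, hp, hN⟩ := P_top Q m
  have := Q.simpleL m
  have hs : Function.Surjective h := by
    rcases eq_bot_or_eq_top (LinearMap.range h) with h1 | h1
    · exact absurd (LinearMap.range_eq_bot.1 h1) hne
    · exact LinearMap.range_eq_top.1 h1
  have hk : LinearMap.ker h ≤ LinearMap.ker p := hN _ (fun h1 => hne (LinearMap.ker_eq_top.1 h1))
  let e := h.quotKerEquivOfSurjective hs
  have : IsSimpleModule S (↥(Q.P m) ⧸ LinearMap.ker h) := IsSimpleModule.congr e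
  let t : (↥(Q.P m) ⧸ LinearMap.ker h) →ₗ[S] ↥(Q.L m) := Submodule.liftQ _ p hk
  rcases LinearMap.bijective_or_eq_zero t with ht | ht
  · exact ⟨e.symm.trans (LinearEquiv.ofBijective t ht)⟩
  · exfalso
    obtain ⟨y, hy⟩ := exists_ne (0 : ↥(Q.L m))
    obtain ⟨x, rfl⟩ := hp y
    apply hy
    show t (Submodule.Quotient.mk x) = 0
    rw [ht]; rfl

theorem CF_L {m n : Λ} (h : CF Q m (Q.L n)) : m = n := by
  obtain ⟨h, hne⟩ := h
  by_contra hmn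
  exact (Q.nonisoL n m (Ne.symm hmn)).false (equiv_of_P_simple (Q.simpleL n) h hne).some

theorem CF_L_self (m : Λ) : CF Q m (Q.L m) := by
  obtain ⟨p, hp, -⟩ := P_top Q m
  refine ⟨p, ?_⟩
  rintro rfl
  have := Q.simpleL m
  obtain ⟨y, hy⟩ := exists_ne (0 : ↥(Q.L m))
  obtain ⟨x, rfl⟩ := hp y
  exact hy rfl

theorem CF.inj {m : Λ} {A B : ModuleCat.{0} S} (f : ↥A →ₗ[S] ↥B) (hf : Function.Injective f)
    (h : CF Q m A) : CF Q m B := by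
  obtain ⟨h, hne⟩ := h
  refine ⟨f ∘ₗ h, fun h0 => hne ?_⟩
  ext x
  exact hf (by simpa using congrArg (fun z => z x) h0)

theorem CF.surj {m : Λ} {B C : ModuleCat.{0} S} (g : ↥B →ₗ[S] ↥C) (hg : Function.Surjective g)
    (h : CF Q m C) : CF Q m B := by
  obtain ⟨h, hne⟩ := h
  obtain ⟨t, ht⟩ := Module.projective_lifting_property g h hg
  refine ⟨t, fun h0 => hne ?_⟩
  rw [← ht, h0, LinearMap.comp_zero]

theorem CF.ses {m : Λ} {A B C : ModuleCat.{0} S} (hS : SES A B C) (h : CF Q m B) :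
    CF Q m A ∨ CF Q m C := by
  obtain ⟨f, g, hf, hg, hex⟩ := hS
  obtain ⟨h, hne⟩ := h
  by_cases h0 : g ∘ₗ h = 0
  · left
    have hr : ∀ x, h x ∈ LinearMap.range f := fun x =>
      (hex _).1 (by simpa using congrArg (fun z => z x) h0)
    refine ⟨(LinearEquiv.ofInjective f hf).symm.toLinearMap ∘ₗ LinearMap.codRestrict _ h hr, ?_⟩
    intro h1
    apply hne
    ext x
    have := congrArg (fun z => z x) h1
    simp only [LinearMap.comp_apply, LinearEquiv.coe_coe, LinearMap.zero_apply,
      LinearEquiv.map_eq_zero_iff] at this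
    exact congrArg Subtype.val this
  · exact Or.inr ⟨_, h0⟩

theorem CF.filt {X : Λ → ModuleCat.{0} S} {m : Λ} {s : Multiset Λ} {M : ModuleCat.{0} S}
    (hF : Filt X s M) (h : CF Q m M) : ∃ j ∈ s, CF Q m (X j) := by
  induction hF with
  | zero M hM =>
    obtain ⟨h, hne⟩ := h
    exact absurd (LinearMap.ext fun x => Subsingleton.elim _ _) hne
  | cons j s M' M hS _ ih =>
    rcases h.ses hS with h | h
    · obtain ⟨j', hj, h'⟩ := ih h
      exact ⟨j', Multiset.mem_cons_of_mem hj, h'⟩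
    · exact ⟨j, Multiset.mem_cons_self _ _, h⟩

theorem isCompFactor_iff (m : Λ) (M : ModuleCat.{0} S) :
    IsCompFactor S (Q.L m) M ↔ CF Q m M := by
  constructor
  · rintro ⟨A, B, hAB, ⟨e⟩⟩
    have h1 : CF Q m (ModuleCat.of S (subquot S A B)) :=
      (CF_L_self m).inj e.symm.toLinearMap e.symm.injective
    have h2 : CF Q m (ModuleCat.of S B) :=
      h1.surj (B := ModuleCat.of S B) (Submodule.mkQ _) (Submodule.mkQ_surjective _)
    exact h2.inj B.subtype Subtype.val_injective
  · rintro ⟨h, hne⟩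
    obtain ⟨p, hp, hN⟩ := P_top Q m
    have hk : LinearMap.ker h ≤ LinearMap.ker p := hN _ (fun h1 => hne (LinearMap.ker_eq_top.1 h1))
    refine ⟨(LinearMap.ker p).map h, LinearMap.range h, LinearMap.map_le_range, ?_⟩
    let A := (LinearMap.ker p).map h
    let t : ↥(Q.P m) →ₗ[S] subquot S A (LinearMap.range h) := Submodule.mkQ _ ∘ₗ h.rangeRestrict
    have ht : Function.Surjective t :=
      (Submodule.mkQ_surjective _).comp h.surjective_rangeRestrict
    have hkt : LinearMap.ker t = LinearMap.ker p := by
      ext x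
      simp only [t, LinearMap.mem_ker, LinearMap.comp_apply, Submodule.mkQ_apply,
        Submodule.Quotient.mk_eq_zero, Submodule.mem_comap]
      constructor
      · rintro ⟨y, hy, hyx⟩
        have : x - y ∈ LinearMap.ker p := hk (by
          rw [LinearMap.mem_ker, map_sub, hyx]; exact sub_self _)
        have h2 := add_mem this hy
        simpa using h2
      · intro hx
        exact ⟨x, hx, rfl⟩
    exact ⟨(t.quotKerEquivOfSurjective ht).symm.trans
      ((Submodule.quotEquivOfEq _ _ hkt).trans (p.quotKerEquivOfSurjective hp))⟩

theorem CF_std {m n : Λ} (h : CF Q m (Q.std n)) : m ≤ n := by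
  obtain ⟨K, ⟨e⟩, h1, -⟩ := Q.stdSpec n
  refine h1 m ((isCompFactor_iff m _).2 ?_)
  exact h.inj e.toLinearMap e.injective

theorem CF_costd {m n : Λ} (h : CF Q m (Q.costd n)) : m ≤ n := by
  obtain ⟨K, ⟨e⟩, h1, -⟩ := Q.costdSpec n
  refine h1 m ((isCompFactor_iff m _).2 ?_)
  exact h.inj e.toLinearMap e.injective

theorem count_univ_map {n : ℕ} (g : Fin n → Λ) (l : Λ) [DecidableEq Λ] :
    Multiset.count l (Finset.univ.val.map g) = Nat.card {i : Fin n // g i = l} := by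
  rw [Multiset.count_map, Nat.card_eq_fintype_card, Fintype.card_subtype]
  simp only [Finset.card, Finset.filter_val, eq_comm]

theorem std_finite (m : Λ) : Module.Finite S ↥(Q.std m) := by
  obtain ⟨K, ⟨e⟩, -, -⟩ := Q.stdSpec m
  have := P_finite Q m
  exact Module.Finite.equiv e.symm

/-- some surjection `P m → Δ m` -/
theorem std_quot (m : Λ) : ∃ q : ↥(Q.P m) →ₗ[S] ↥(Q.std m), Function.Surjective q := by
  obtain ⟨K, ⟨e⟩, -, -⟩ := Q.stdSpec m
  exact ⟨e.symm.toLinearMap ∘ₗ K.mkQ, e.symm.surjective.comp K.mkQ_surjective⟩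

/-- The radical sequence of `Δ m`. -/
theorem std_rad (m : Λ) : ∃ R : ModuleCat.{0} S, SES R (Q.std m) (Q.L m) ∧ ¬ CF Q m R := by
  classical
  obtain ⟨n, f, hm, h0, h1, hs, hc⟩ := Q.multOne m
  choose g hg using fun i => Q.fullL (ModuleCat.of S (subquot S (f i.castSucc) (f i.succ))) (hs i)
  have hF := filt_of_hasFiltration Q.L (Q.std m) n f g ⟨hm, h0, h1, hg⟩
  have hcount : Multiset.count m (Finset.univ.val.map g) = 1 := by
    rw [count_univ_map, ← hc]
    refine Nat.card_congr (Equiv.subtypeEquivRight fun i => ?_)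
    constructor
    · rintro rfl; exact hg i
    · rintro ⟨e⟩
      by_contra hne
      exact (Q.nonisoL _ _ hne).false ((hg i).some.symm.trans e)
  obtain ⟨q, hq⟩ := std_quot (Q := Q) m
  generalize Finset.univ.val.map g = s at hF hcount
  cases hF with
  | zero _ h => simp at hcount
  | cons j s M' _ hS hF' =>
    have hj : m = j := by
      obtain ⟨u, v, hu, hv, huv⟩ := hS
      refine CF_L (Q := Q) ⟨v ∘ₗ q, fun h => ?_⟩
      have := Q.simpleL j
      obtain ⟨y, hy⟩ := exists_ne (0 : ↥(Q.L j))
      obtain ⟨x, rfl⟩ := (hv.comp hq) y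
      exact hy (congrArg (fun z => z x) h)
    subst hj
    refine ⟨M', hS, fun h => ?_⟩
    obtain ⟨j, hj, hjm⟩ := h.filt hF'
    have := CF_L hjm
    subst this
    rw [Multiset.count_cons_self] at hcount
    have := Multiset.count_pos.2 hj
    omega

theorem std_nontrivial (m : Λ) : Nontrivial ↥(Q.std m) := by
  obtain ⟨R, ⟨u, v, hu, hv, huv⟩, -⟩ := std_rad (Q := Q) m
  have := Q.simpleL m
  exact hv.nontrivial

theorem ne_zero_of_surj {A B : ModuleCat.{0} S} [Nontrivial ↥B] {f : ↥A →ₗ[S] ↥B}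
    (hf : Function.Surjective f) : f ≠ 0 := by
  rintro rfl
  obtain ⟨y, hy⟩ := exists_ne (0 : ↥B)
  obtain ⟨x, rfl⟩ := hf y
  exact hy rfl

/-- The kernel of `P m → Δ m` is filtered by larger standard modules. -/
theorem P_std (m : Λ) : ∃ (K : ModuleCat.{0} S) (s : Multiset Λ), SES K (Q.P m) (Q.std m) ∧
    Filt Q.std s K ∧ ∀ j ∈ s, m < j := by
  classical
  obtain ⟨n, f, g, hF, hle, hc⟩ := Q.projFilt m
  have hF := filt_of_hasFiltration Q.std (Q.P m) n f g hF
  rw [← count_univ_map] at hc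
  have hle : ∀ j ∈ Finset.univ.val.map g, m ≤ j := by
    intro j hj
    obtain ⟨i, -, rfl⟩ := Multiset.mem_map.1 hj
    exact hle i
  generalize Finset.univ.val.map g = s at hF hc hle
  cases hF with
  | zero _ h => simp at hc
  | cons j s M' _ hS hF' =>
    have hj : m = j := by
      obtain ⟨u, v, hu, hv, huv⟩ := hS
      obtain ⟨R, ⟨u', v', hu', hv', huv'⟩, -⟩ := std_rad (Q := Q) j
      have := Q.simpleL j
      exact CF_L (Q := Q) ⟨v' ∘ₗ v, ne_zero_of_surj (f := v' ∘ₗ v) (hv'.comp hv)⟩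
    subst hj
    refine ⟨M', s, hS, hF', fun j hj => ?_⟩
    refine lt_of_le_of_ne (hle j (Multiset.mem_cons_of_mem hj)) ?_
    rintro rfl
    rw [Multiset.count_cons_self] at hc
    have := Multiset.count_pos.2 hj
    omega

theorem CF_of_hom_std {m : Λ} {M : ModuleCat.{0} S} (f : ↥(Q.std m) →ₗ[S] ↥M) (hf : f ≠ 0) :
    CF Q m M := by
  obtain ⟨q, hq⟩ := std_quot (Q := Q) m
  refine ⟨f ∘ₗ q, fun h => hf ?_⟩
  ext y
  obtain ⟨x, rfl⟩ := hq y
  exact congrArg (fun z => z x) h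

/-- nonzero endomorphisms of `Δ m` are surjective -/
theorem std_endo {m : Λ} (f : ↥(Q.std m) →ₗ[S] ↥(Q.std m)) (hf : f ≠ 0) :
    Function.Surjective f := by
  obtain ⟨R, ⟨u, v, hu, hv, huv⟩, hR⟩ := std_rad (Q := Q) m
  obtain ⟨q, hq⟩ := std_quot (Q := Q) m
  obtain ⟨p, hp, hN⟩ := P_top Q m
  have := Q.simpleL m
  by_contra hns
  have h1 : (LinearMap.range f).comap q ≠ ⊤ := by
    intro h
    apply hns
    rw [← LinearMap.range_eq_top, eq_top_iff]
    intro y _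
    obtain ⟨x, rfl⟩ := hq y
    have : x ∈ (LinearMap.range f).comap q := by rw [h]; trivial
    exact this
  -- the kernel of `v ∘ q` is the kernel of `p`
  have hk : LinearMap.ker p = LinearMap.ker (v ∘ₗ q) := by
    have h2 : LinearMap.ker (v ∘ₗ q) ≠ ⊤ := fun h =>
      ne_zero_of_surj (f := v ∘ₗ q) (hv.comp hq) (LinearMap.ker_eq_top.1 h)
    have h3 : IsCoatom (LinearMap.ker (v ∘ₗ q)) :=
      LinearMap.isCoatom_ker_of_surjective (hv.comp hq)
    rcases h3.le_iff.1 (hN _ h2) with h | h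
    · exact absurd (LinearMap.ker_eq_top.1 h) (ne_zero_of_surj hp)
    · exact h
  have hvf : v ∘ₗ f = 0 := by
    ext y
    obtain ⟨x, hx⟩ := hq (f y)
    have : x ∈ LinearMap.ker (v ∘ₗ q) := by
      rw [← hk]; apply hN _ h1; exact ⟨y, hx.symm⟩
    have h5 : v (q x) = 0 := this
    rw [hx] at h5
    exact h5
  -- `f` lands in `R`
  have hr : ∀ x, f x ∈ LinearMap.range u := fun x =>
      (huv _).1 (by simpa using congrArg (fun z => z x) hvf)
  apply hR
  refine CF_of_hom_std ((LinearEquiv.ofInjective u hu).symm.toLinearMap ∘ₗ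
    LinearMap.codRestrict _ f hr) ?_
  intro h6
  apply hf
  ext x
  have := congrArg (fun z => z x) h6
  simp only [LinearMap.comp_apply, LinearEquiv.coe_coe, LinearMap.zero_apply,
    LinearEquiv.map_eq_zero_iff] at this
  exact congrArg Subtype.val this

theorem hom_filt_zero {X : Λ → ModuleCat.{0} S} {s : Multiset Λ} {K M : ModuleCat.{0} S}
    (hK : Filt X s K) (hM : ∀ j ∈ s, ∀ f : ↥(X j) →ₗ[S] ↥M, f = 0) (f : ↥K →ₗ[S] ↥M) : f = 0 := by
  induction hK with
  | zero K h => exact LinearMap.ext fun x => by rw [Subsingleton.elim x 0]; simp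
  | cons j s K' K hS _ ih =>
    obtain ⟨u, v, hu, hv, huv⟩ := hS
    have h1 := ih (fun j hj => hM j (Multiset.mem_cons_of_mem hj)) (f ∘ₗ u)
    have hk : LinearMap.ker v ≤ LinearMap.ker f := by
      intro x hx
      obtain ⟨y, rfl⟩ := (huv x).1 hx
      exact congrArg (fun z => z y) h1
    have h2 := hM j (Multiset.mem_cons_self _ _)
      ((Submodule.liftQ _ f hk) ∘ₗ (v.quotKerEquivOfSurjective hv).symm.toLinearMap)
    ext x
    have h3 := congrArg (fun z => z (v x)) h2
    have h4 : (v.quotKerEquivOfSurjective hv).symm (v x) = Submodule.Quotient.mk x := by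
      rw [LinearEquiv.symm_apply_eq]; rfl
    simp only [LinearMap.comp_apply, LinearEquiv.coe_coe, h4] at h3
    exact h3

/-- splitting of `M → Δ n` -/
theorem std_split {n : Λ} {s : Multiset Λ} {M' M : ModuleCat.{0} S} {f : ↥M' →ₗ[S] ↥M}
    {g : ↥M →ₗ[S] ↥(Q.std n)} (h : Ex f g) (hF : Filt Q.std s M') (hs : ∀ j ∈ s, ¬ n < j) :
    ∃ t : ↥(Q.std n) →ₗ[S] ↥M, ∀ x, g (t x) = x := by
  obtain ⟨K, sK, ⟨u, v, hu, hv, huv⟩, hK, hsK⟩ := P_std (Q := Q) n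
  obtain ⟨hf, hg, hex⟩ := h
  obtain ⟨l, hl⟩ := Module.projective_lifting_property g v hg
  have hl' : ∀ x, g (l x) = v x := fun x => congrArg (fun z => z x) hl
  have hr : ∀ x, l (u x) ∈ LinearMap.range f := fun x =>
    (hex _).1 (by rw [hl']; exact (huv _).2 ⟨x, rfl⟩)
  have h0 := hom_filt_zero hK (M := M') (by
    intro j hj φ
    by_contra hne
    obtain ⟨i, hi, hji⟩ := (CF_of_hom_std φ hne).filt hF
    exact hs i hi ((hsK j hj).trans_le (CF_std hji)))
    ((LinearEquiv.ofInjective f hf).symm.toLinearMap ∘ₗ LinearMap.codRestrict _ (l ∘ₗ u) hr)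
  have h1 : ∀ x, l (u x) = 0 := by
    intro x
    have := congrArg (fun z => z x) h0
    simp only [LinearMap.comp_apply, LinearEquiv.coe_coe, LinearMap.zero_apply,
      LinearEquiv.map_eq_zero_iff] at this
    exact congrArg Subtype.val this
  have hk : LinearMap.ker v ≤ LinearMap.ker l := by
    intro x hx
    obtain ⟨y, rfl⟩ := (huv x).1 hx
    exact h1 y
  refine ⟨(Submodule.liftQ _ l hk) ∘ₗ (v.quotKerEquivOfSurjective hv).symm.toLinearMap, ?_⟩
  intro y
  obtain ⟨x, rfl⟩ := hv y
  have h4 : (v.quotKerEquivOfSurjective hv).symm (v x) = Submodule.Quotient.mk x := by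
    rw [LinearEquiv.symm_apply_eq]; rfl
  simp only [LinearMap.comp_apply, LinearEquiv.coe_coe, h4]
  exact hl' x

theorem ses_of_split {M' M C : ModuleCat.{0} S} {f : ↥M' →ₗ[S] ↥M}
    {g : ↥M →ₗ[S] ↥C} (h : Ex f g) (t : ↥C →ₗ[S] ↥M) (ht : ∀ x, g (t x) = x) :
    SES C M M' := by
  obtain ⟨hf, hg, hex⟩ := h
  have hr : ∀ x, (LinearMap.id - t ∘ₗ g : ↥M →ₗ[S] ↥M) x ∈ LinearMap.range f := fun x =>
    (hex _).1 (by simp [ht])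
  let w : ↥M →ₗ[S] ↥M' := (LinearEquiv.ofInjective f hf).symm.toLinearMap ∘ₗ
    LinearMap.codRestrict _ (LinearMap.id - t ∘ₗ g) hr
  have hw : ∀ x, f (w x) = x - t (g x) := by
    intro x
    have : (LinearEquiv.ofInjective f hf) (w x) = ⟨_, hr x⟩ := by simp [w]; rfl
    exact congrArg Subtype.val this
  refine ⟨t, w, ?_, ?_, ?_⟩
  · intro x y hxy
    rw [← ht x, hxy, ht]
  · intro y
    refine ⟨f y, hf ?_⟩
    rw [hw, (hex _).2 ⟨y, rfl⟩]; simp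
  · intro x
    constructor
    · intro h
      have := hw x
      rw [h, map_zero] at this
      exact ⟨g x, (sub_eq_zero.1 this.symm).symm⟩
    · rintro ⟨y, rfl⟩
      apply hf
      rw [hw, ht]; simp

/-- a maximal standard section can be moved to the bottom -/
theorem filt_bottom {s : Multiset Λ} {M : ModuleCat.{0} S} (hF : Filt Q.std s M) {n : Λ}
    (hn : n ∈ s) (hmax : ∀ j ∈ s, ¬ n < j) :
    ∃ (s' : Multiset Λ) (M'' : ModuleCat.{0} S), s = n ::ₘ s' ∧ SES (Q.std n) M M'' ∧
      Filt Q.std s' M'' := by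
  induction hF with
  | zero => simp at hn
  | cons j s M' M hS hF' ih =>
    by_cases hns : n ∈ s
    · obtain ⟨s', M'', rfl, hS', hF''⟩ := ih hns (fun j hj => hmax j (Multiset.mem_cons_of_mem hj))
      obtain ⟨G, h1, h2⟩ := hS'.third hS
      exact ⟨j ::ₘ s', G, Multiset.cons_swap _ _ _, h1, .cons j s' _ _ h2 hF''⟩
    · have hj : n = j := by
        rcases Multiset.mem_cons.1 hn with h | h
        · exact h
        · exact absurd h hns
      subst hj
      obtain ⟨f, g, hfg⟩ := hS
      obtain ⟨t, ht⟩ := std_split hfg hF' (fun j hj => hmax j (Multiset.mem_cons_of_mem hj))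
      exact ⟨s, M', rfl, ses_of_split hfg t ht, hF'⟩

def FD (Q : QHData S Λ) (M : ModuleCat.{0} S) : Prop := ∃ s, Filt Q.std s M

theorem FD.congr {M N : ModuleCat.{0} S} (h : FD Q M) (e : ↥M ≃ₗ[S] ↥N) : FD Q N := by
  obtain ⟨s, h⟩ := h
  exact ⟨s, h.congr e⟩

theorem FD.ses {A B C : ModuleCat.{0} S} (h : SES A B C) (hA : FD Q A) (hC : FD Q C) : FD Q B := by
  obtain ⟨s, hA⟩ := hA
  obtain ⟨t, hC⟩ := hC
  exact ⟨_, hA.ses hC h⟩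

theorem FD.std (m : Λ) : FD Q (Q.std m) := ⟨_, Filt.single _ m⟩

theorem FD.zero {M : ModuleCat.{0} S} (h : Subsingleton ↥M) : FD Q M := ⟨0, .zero M h⟩

theorem FD.P (m : Λ) : FD Q (Q.P m) := by
  obtain ⟨K, s, h, hF, -⟩ := P_std (Q := Q) m
  exact FD.ses h ⟨s, hF⟩ (FD.std m)

theorem FD.finite {M : ModuleCat.{0} S} (h : FD Q M) : Module.Finite S ↥M := by
  obtain ⟨s, h⟩ := h
  exact h.finite std_finite

variable [IsNoetherianRing S]

theorem FD.ker_std {m : Λ} (N : ℕ) : ∀ (s : Multiset Λ) (B : ModuleCat.{0} S),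
    Multiset.card s = N → Filt Q.std s B → ∀ g : ↥B →ₗ[S] ↥(Q.std m), Function.Surjective g →
    FD Q (ModuleCat.of S (LinearMap.ker g)) := by
  classical
  induction N with
  | zero =>
    intro s B hs hF g hg
    rw [Multiset.card_eq_zero] at hs
    subst hs
    obtain ⟨q, hq⟩ := std_quot (Q := Q) m
    have := std_nontrivial (Q := Q) m
    obtain ⟨j, hj, -⟩ := (CF.surj g hg ⟨q, ne_zero_of_surj hq⟩).filt hF
    simp at hj
  | succ N ih =>
    intro s B hs hF g hg
    obtain ⟨q, hq⟩ := std_quot (Q := Q) m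
    have := std_nontrivial (Q := Q) m
    obtain ⟨j, hj, hmj⟩ := (CF.surj g hg ⟨q, ne_zero_of_surj hq⟩).filt hF
    have hmj := CF_std hmj
    obtain ⟨n, hjn, hn⟩ := s.toFinset.exists_le_maximal (Multiset.mem_toFinset.2 hj)
    have hns : n ∈ s := Multiset.mem_toFinset.1 hn.prop
    obtain ⟨s', B'', rfl, hS, hF''⟩ := filt_bottom hF hns
      (fun i hi hni => hn.not_gt (Multiset.mem_toFinset.2 hi) hni)
    obtain ⟨u, v, hu, hv, huv⟩ := hS
    by_cases h0 : g ∘ₗ u = 0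
    · -- `g` factors through `B''`
      have hk : LinearMap.ker v ≤ LinearMap.ker g := by
        intro x hx
        obtain ⟨y, rfl⟩ := (huv x).1 hx
        exact congrArg (fun z => z y) h0
      let g' : ↥B'' →ₗ[S] ↥(Q.std m) :=
        (Submodule.liftQ _ g hk) ∘ₗ (v.quotKerEquivOfSurjective hv).symm.toLinearMap
      have hg' : ∀ x, g' (v x) = g x := by
        intro x
        have h4 : (v.quotKerEquivOfSurjective hv).symm (v x) = Submodule.Quotient.mk x := by
          rw [LinearEquiv.symm_apply_eq]; rfl
        simp only [g', LinearMap.comp_apply, LinearEquiv.coe_coe, h4]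
        rfl
      have hgs : Function.Surjective g' := fun y => by
        obtain ⟨x, rfl⟩ := hg y
        exact ⟨v x, hg' x⟩
      have h1 := ih s' B'' (by simpa using hs) hF'' g' hgs
      have hS1 : SES (Q.std n) B B'' := ⟨u, v, hu, hv, huv⟩
      refine FD.ses (A := Q.std n) (C := ModuleCat.of S (LinearMap.ker g')) ?_ (FD.std n) h1
      refine ⟨LinearMap.codRestrict _ u (fun y => LinearMap.congr_fun h0 y),
        LinearMap.codRestrict _ (v ∘ₗ (LinearMap.ker g).subtype) ?_, ?_, ?_, ?_⟩
      · rintro ⟨x, hx⟩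
        exact (hg' x).trans hx
      · intro a b hab
        exact hu (congrArg Subtype.val hab)
      · rintro ⟨y, hy⟩
        obtain ⟨x, rfl⟩ := hv y
        exact ⟨⟨x, (hg' x).symm.trans hy⟩, rfl⟩
      · rintro ⟨x, hx⟩
        constructor
        · intro h
          obtain ⟨a, ha⟩ := (huv x).1 (congrArg Subtype.val h)
          exact ⟨a, Subtype.ext ha⟩
        · rintro ⟨a, ha⟩
          exact Subtype.ext ((huv x).2 ⟨a, congrArg Subtype.val ha⟩)
    · have hnm : n ≤ m := CF_std (CF_of_hom_std _ h0)
      have : n = m := le_antisymm hnm (hmj.trans hjn)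
      subst this
      have hs1 : Function.Surjective (g ∘ₗ u) := std_endo _ h0
      have := std_finite (Q := Q) n
      have hs2 : Function.Injective (g ∘ₗ u) :=
        IsNoetherian.injective_of_surjective_endomorphism _ hs1
      refine FD.congr ⟨s', hF''⟩ (LinearEquiv.symm ?_)
      refine LinearEquiv.ofBijective (v ∘ₗ (LinearMap.ker g).subtype) ⟨?_, ?_⟩
      · rw [injective_iff_map_eq_zero]
        rintro ⟨x, hx⟩ h
        obtain ⟨a, rfl⟩ := (huv x).1 h
        have : a = 0 := hs2 (by rw [map_zero]; exact hx)
        subst this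
        exact Subtype.ext (map_zero u)
      · intro y
        obtain ⟨x, rfl⟩ := hv y
        obtain ⟨a, ha⟩ := hs1 (g x)
        have ha' : g (u a) = g x := ha
        refine ⟨⟨x - u a, by rw [LinearMap.mem_ker, map_sub, ha', sub_self]⟩, ?_⟩
        show v (x - u a) = v x
        rw [map_sub, (huv (u a)).2 ⟨a, rfl⟩, sub_zero]

/-- `F(Δ)` is closed under kernels of surjections. -/
theorem FD.ker {A B C : ModuleCat.{0} S} (h : SES A B C) (hB : FD Q B) (hC : FD Q C) :
    FD Q A := by
  obtain ⟨s, hC⟩ := hC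
  induction hC generalizing A B with
  | zero C hC =>
    exact hB.congr (h.equiv_of_right_zero hC).some.symm
  | cons m s C' C hS _ ih =>
    obtain ⟨B', h1, f, g, hfg⟩ := h.pre hS
    obtain ⟨t, hB⟩ := hB
    exact ih h1 ((FD.ker_std _ t B rfl hB g hfg.2.1).congr (SES.equiv_ker hfg).some.symm)

end QHAux

namespace QHAux
open QHPaper

variable {S : Type} [Ring S] {Λ : Type} [Fintype Λ] [PartialOrder Λ]

/-- `M` has a resolution of length `d` by modules in `F(Δ)` (recursive form). -/
def W (Q : QHData S Λ) : ℕ → ModuleCat.{0} S → Prop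
  | 0, M => FD Q M
  | d + 1, M => ∃ K F : ModuleCat.{0} S, SES K F M ∧ FD Q F ∧ W Q d K

variable {Q : QHData S Λ}

theorem W.congr {d : ℕ} {M N : ModuleCat.{0} S} (h : W Q d M) (e : ↥M ≃ₗ[S] ↥N) : W Q d N := by
  cases d with
  | zero => exact FD.congr h e
  | succ d =>
    obtain ⟨K, F, h1, h2, h3⟩ := h
    exact ⟨K, F, h1.congr (.refl _ _) (.refl _ _) e, h2, h3⟩

theorem W.succ {d : ℕ} {M : ModuleCat.{0} S} (h : W Q d M) : W Q (d + 1) M := by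
  induction d generalizing M with
  | zero => exact ⟨Z0, M, ses_zero_left M, h, FD.zero inferInstance⟩
  | succ d ih =>
    obtain ⟨K, F, h1, h2, h3⟩ := h
    exact ⟨K, F, h1, h2, ih h3⟩

theorem W.mono {d e : ℕ} (hde : d ≤ e) {M : ModuleCat.{0} S} (h : W Q d M) : W Q e M := by
  induction hde with
  | refl => exact h
  | step _ ih => exact ih.succ

theorem FD.W {M : ModuleCat.{0} S} (h : FD Q M) (d : ℕ) : W Q d M :=
  W.mono (d := 0) (Nat.zero_le d) h

theorem W.finite {d : ℕ} {M : ModuleCat.{0} S} (h : W Q d M) : Module.Finite S ↥M := by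
  cases d with
  | zero => exact FD.finite h
  | succ d =>
    obtain ⟨K, F, h1, h2, h3⟩ := h
    exact h1.finite_right h2.finite

variable [IsNoetherianRing S]

theorem W.kerFD {d : ℕ} {A X F : ModuleCat.{0} S} (h : SES A X F) (hX : W Q d X) (hF : FD Q F) :
    W Q d A := by
  cases d with
  | zero => exact FD.ker h hX hF
  | succ d =>
    obtain ⟨K, F', h1, h2, h3⟩ := hX
    obtain ⟨A', h4, h5⟩ := h1.pre h
    exact ⟨K, A', h4, FD.ker h5 h2 hF, h3⟩

variable [IsArtinianRing S]

theorem finLen {M : ModuleCat.{0} S} (h : Module.Finite S ↥M) : IsFiniteLength S ↥M :=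
  isFiniteLength_iff_isNoetherian_isArtinian.2 ⟨inferInstance, inferInstance⟩

/-- Every finite module is a composition-series-filtered module with actual factors. -/
theorem filt_L_of_len (Q : QHData S Λ) {M : Type} [AddCommGroup M] [Module S M]
    (h : IsFiniteLength S M) : ∃ s, Filt Q.L s (ModuleCat.of S M) ∧
      ∀ j ∈ s, CF Q j (ModuleCat.of S M) := by
  induction h with
  | of_subsingleton => exact ⟨0, .zero _ (by assumption), by simp⟩
  | @of_simple_quotient M _ _ N hN _ ih =>
    obtain ⟨s, hs, hcf⟩ := ih
    obtain ⟨m, ⟨e⟩⟩ := Q.fullL (ModuleCat.of S (M ⧸ N)) hN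
    have hS := (ses_quot (B := ModuleCat.of S M) N).congr (.refl _ _) (.refl _ _) e
    refine ⟨m ::ₘ s, .cons m s _ _ hS hs, ?_⟩
    intro j hj
    obtain ⟨f, g, hf, hg, hex⟩ := hS
    rcases Multiset.mem_cons.1 hj with rfl | hj
    · exact (CF_L_self j).surj g hg
    · exact (hcf j hj).inj f hf

theorem filt_L (Q : QHData S Λ) {M : ModuleCat.{0} S} (h : Module.Finite S ↥M) :
    ∃ s, Filt Q.L s M ∧ ∀ j ∈ s, CF Q j M := filt_L_of_len Q (finLen h)

theorem exists_cover {M : ModuleCat.{0} S} (h : Module.Finite S ↥M) :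
    ∃ (P : ModuleCat.{0} S) (p : ↥P →ₗ[S] ↥M), FD Q P ∧
      Function.Surjective p := by
  obtain ⟨s, hs, -⟩ := filt_L Q h
  clear h
  induction hs with
  | zero M hM => exact ⟨M, LinearMap.id, FD.zero hM, Function.surjective_id⟩
  | cons m s M' M hS _ ih =>
    obtain ⟨P', p', hFD, hp'⟩ := ih
    obtain ⟨f, g, hf, hg, hex⟩ := hS
    obtain ⟨p, hp, -⟩ := P_top Q m
    obtain ⟨t, ht⟩ := Module.projective_lifting_property g p hg
    have ht' : ∀ x, g (t x) = p x := fun x => congrArg (fun z => z x) ht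
    refine ⟨ModuleCat.of S (↥P' × ↥(Q.P m)), (f ∘ₗ p').coprod t,
      FD.ses (ses_prod _ _) hFD (FD.P m), ?_⟩
    intro y
    obtain ⟨x, hx⟩ := hp (g y)
    obtain ⟨a, ha⟩ := (hex (y - t x)).1 (by rw [map_sub, ht', hx, sub_self])
    obtain ⟨b, rfl⟩ := hp' a
    refine ⟨(b, x), ?_⟩
    simp [ha]

theorem W.ker_of_ext {d : ℕ}
    (ext : ∀ {A B C : ModuleCat.{0} S}, SES A B C → W Q d A → W Q d C → W Q d B)
    {A B C : ModuleCat.{0} S} (h : SES A B C) (hB : W Q d B) (hC : W Q (d + 1) C) : W Q d A := by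
  obtain ⟨K, F, h1, h2, h3⟩ := hC
  obtain ⟨X, h4, h5⟩ := h.pullback h1
  exact W.kerFD h4 (ext h5 h3 hB) h2

theorem W.ext {d : ℕ} {A B C : ModuleCat.{0} S} (h : SES A B C) (hA : W Q d A) (hC : W Q d C) :
    W Q d B := by
  induction d generalizing A B C with
  | zero => exact FD.ses h hA hC
  | succ d ih =>
    have hB := h.finite_mid hA.finite hC.finite
    obtain ⟨K, F, h1, h2, h3⟩ := hA
    obtain ⟨P, p, hP, hp⟩ := exists_cover (Q := Q) hB
    obtain ⟨Z, Kc, h4, h5, h6⟩ := h.horse h1 p hp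
    exact ⟨Z, _, h4, FD.ses (ses_prod _ _) h2 hP,
      ih h5 h3 (W.ker_of_ext (fun h => ih h) h6 (hP.W d) hC)⟩

theorem W.ker {d : ℕ} {A B C : ModuleCat.{0} S} (h : SES A B C) (hB : W Q d B)
    (hC : W Q (d + 1) C) : W Q d A := W.ker_of_ext (fun h => W.ext h) h hB hC

theorem W.of_factors {d : ℕ} {M : ModuleCat.{0} S} (h : Module.Finite S ↥M)
    (hM : ∀ j, CF Q j M → W Q d (Q.L j)) : W Q d M := by
  obtain ⟨s, hs, hcf⟩ := filt_L Q h
  have : ∀ j ∈ s, W Q d (Q.L j) := fun j hj => hM j (hcf j hj)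
  clear hcf hM h
  induction hs with
  | zero M hM => exact (FD.zero hM).W d
  | cons m s M' M hS _ ih =>
    exact W.ext hS (ih fun j hj => this j (Multiset.mem_cons_of_mem hj))
      (this m (Multiset.mem_cons_self _ _))

theorem W.exists_L (m : Λ) : ∃ d, W Q d (Q.L m) := by
  induction m using WellFoundedLT.induction with
  | ind m ih =>
    choose! d hd using ih
    obtain ⟨R, hS, hR⟩ := std_rad (Q := Q) m
    have hfin := hS.finite_left (std_finite m)
    have hlt : ∀ j, CF Q j R → j < m := by
      intro j hj
      refine lt_of_le_of_ne ?_ ?_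
      · obtain ⟨f, g, hf, -⟩ := hS
        exact CF_std (hj.inj f hf)
      · rintro rfl; exact hR hj
    refine ⟨Finset.univ.sup d + 1, R, Q.std m, hS, FD.std m, ?_⟩
    exact W.of_factors hfin fun j hj =>
      (hd j (hlt j hj)).mono (Finset.le_sup (Finset.mem_univ j))

/-- The core argument. -/
theorem core {d : ℕ} {l : Λ} {A B C : ModuleCat.{0} S} (h : SES A B C) (eA : ↥A ≃ₗ[S] ↥(Q.L l))
    (hB : Module.Finite S ↥B) (hcf : ∀ j, CF Q j B → W Q d (Q.L j))
    (hmin : ∀ e, W Q e (Q.L l) → d ≤ e) : W Q d B ∧ ∀ e, W Q e B → d ≤ e := by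
  refine ⟨W.of_factors hB hcf, fun e he => ?_⟩
  by_contra hlt
  obtain ⟨d', rfl⟩ : ∃ d', d = d' + 1 := ⟨d - 1, by omega⟩
  have hC : W Q (d' + 1) C := by
    refine W.of_factors (h.finite_right hB) fun j hj => hcf j ?_
    obtain ⟨f, g, hf, hg, hex⟩ := h
    exact hj.surj g hg
  have := (W.ker h (he.mono (by omega)) hC).congr eA
  have := hmin _ this
  omega

end QHAux

namespace QHAux
open QHPaper

variable {S : Type} [Ring S] {Λ : Type} [Fintype Λ] [PartialOrder Λ] {Q : QHData S Λ}
  (dual : Duality S Q)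

section
variable {A B C : ModuleCat.{0} S}

theorem Dzero (hA : Module.Finite S ↥A) (hB : Module.Finite S ↥B) :
    dual.Dmap (0 : ↥A →ₗ[S] ↥B) = 0 := by
  have := dual.Dadd hA hB 0 0
  rw [add_zero] at this
  simpa using this

theorem Deq_zero (hA : Module.Finite S ↥A) (hB : Module.Finite S ↥B) (f : ↥A →ₗ[S] ↥B)
    (h : dual.Dmap f = 0) : f = 0 :=
  (dual.Dfull hA hB).1 (by simpa [Dzero dual hA hB] using h)

theorem Dequiv (hA : Module.Finite S ↥A) (hB : Module.Finite S ↥B) (e : ↥A ≃ₗ[S] ↥B) :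
    Nonempty (↥(dual.D A) ≃ₗ[S] ↥(dual.D B)) := by
  refine ⟨LinearEquiv.ofLinear (dual.Dmap e.symm.toLinearMap) (dual.Dmap e.toLinearMap) ?_ ?_⟩
  · rw [← dual.Dcomp hB hA hB, LinearEquiv.comp_symm, dual.Did _ hB]
  · rw [← dual.Dcomp hA hB hA, LinearEquiv.symm_comp, dual.Did _ hA]

variable [IsNoetherianRing S]

theorem D_ses (hB : Module.Finite S ↥B) (h : SES A B C) :
    SES (dual.D C) (dual.D B) (dual.D A) := by
  have hA := h.finite_left hB
  have hC := h.finite_right hB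
  obtain ⟨f, g, hf, hg, hex⟩ := h
  obtain ⟨h1, h2, h3⟩ := dual.Dexact hA hB hC f g hf hg (by ext x; exact (hex x).symm)
  refine ⟨dual.Dmap g, dual.Dmap f, h1, h2, fun b => ?_⟩
  have : b ∈ LinearMap.range (dual.Dmap g) ↔ b ∈ LinearMap.ker (dual.Dmap f) := by rw [h3]
  exact this.symm

theorem D_inj_of_surj (hA : Module.Finite S ↥A) (hB : Module.Finite S ↥B) (f : ↥A →ₗ[S] ↥B)
    (hf : Function.Surjective f) : Function.Injective (dual.Dmap f) := by
  have hK : Module.Finite S ↥(ModuleCat.of S (LinearMap.ker f)) :=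
    inferInstanceAs (Module.Finite S (LinearMap.ker f))
  exact (dual.Dexact hK hA hB (LinearMap.ker f).subtype f Subtype.val_injective hf
    (by simp)).1

theorem D_surj_of_inj (hA : Module.Finite S ↥A) (hB : Module.Finite S ↥B) (f : ↥A →ₗ[S] ↥B)
    (hf : Function.Injective f) : Function.Surjective (dual.Dmap f) := by
  have hK : Module.Finite S ↥(ModuleCat.of S (↥B ⧸ LinearMap.range f)) :=
    inferInstanceAs (Module.Finite S (↥B ⧸ LinearMap.range f))
  exact (dual.Dexact hA hB hK f (LinearMap.range f).mkQ hf (Submodule.mkQ_surjective _)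
    (by simp)).2.1

theorem surj_of_D_inj (hA : Module.Finite S ↥A) (hB : Module.Finite S ↥B) (f : ↥A →ₗ[S] ↥B)
    (hf : Function.Injective (dual.Dmap f)) : Function.Surjective f := by
  have hK : Module.Finite S ↥(ModuleCat.of S (↥B ⧸ LinearMap.range f)) :=
    inferInstanceAs (Module.Finite S (↥B ⧸ LinearMap.range f))
  let q : ↥B →ₗ[S] ↥(ModuleCat.of S (↥B ⧸ LinearMap.range f)) := (LinearMap.range f).mkQ
  have h0 : q ∘ₗ f = 0 := LinearMap.range_mkQ_comp f
  have h1 : dual.Dmap f ∘ₗ dual.Dmap q = 0 := by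
    rw [← dual.Dcomp hA hB hK, h0, Dzero dual hA hK]
  have h2 : dual.Dmap q = 0 := by
    ext x
    exact hf (by simpa using LinearMap.congr_fun h1 x)
  have h3 := Deq_zero dual hB hK q h2
  intro y
  have : q y = 0 := by rw [h3]; rfl
  exact (Submodule.Quotient.mk_eq_zero _).1 this

theorem inj_of_D_surj (hA : Module.Finite S ↥A) (hB : Module.Finite S ↥B) (f : ↥A →ₗ[S] ↥B)
    (hf : Function.Surjective (dual.Dmap f)) : Function.Injective f := by
  have hK : Module.Finite S ↥(ModuleCat.of S (LinearMap.ker f)) :=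
    inferInstanceAs (Module.Finite S (LinearMap.ker f))
  let j : ↥(ModuleCat.of S (LinearMap.ker f)) →ₗ[S] ↥A := (LinearMap.ker f).subtype
  have h0 : f ∘ₗ j = 0 := LinearMap.comp_ker_subtype f
  have h1 : dual.Dmap j ∘ₗ dual.Dmap f = 0 := by
    rw [← dual.Dcomp hK hA hB, h0, Dzero dual hK hB]
  have h2 : dual.Dmap j = 0 := by
    ext y
    obtain ⟨x, rfl⟩ := hf y
    exact LinearMap.congr_fun h1 x
  have h3 := Deq_zero dual hK hA j h2
  rw [injective_iff_map_eq_zero]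
  intro x hx
  exact LinearMap.congr_fun h3 (⟨x, hx⟩ : LinearMap.ker f)

end

theorem Filt.finite' [IsNoetherianRing S] {X : Λ → ModuleCat.{0} S} {s : Multiset Λ}
    {m : Λ} {M : ModuleCat.{0} S} (hM : Module.Finite S ↥M)
    (h : Filt X s M) (hm : m ∈ s) : Module.Finite S ↥(X m) := by
  induction h with
  | zero => simp at hm
  | cons j s M' M hS _ ih =>
    rcases Multiset.mem_cons.1 hm with rfl | hm
    · exact hS.finite_right hM
    · exact ih (hS.finite_left hM) hm

theorem Filt.Dfilt [IsNoetherianRing S] {X Y : Λ → ModuleCat.{0} S}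
    (e : ∀ m, Nonempty (↥(dual.D (X m)) ≃ₗ[S] ↥(Y m)))
    {s : Multiset Λ} {M : ModuleCat.{0} S} (hM : Module.Finite S ↥M) (h : Filt X s M) :
    Filt Y s (dual.D M) := by
  induction h with
  | zero M h =>
    refine .zero _ ?_
    have h0 : dual.Dmap (LinearMap.id : ↥M →ₗ[S] ↥M) = 0 := by
      rw [← Dzero dual hM hM]; congr 1; ext x; exact Subsingleton.elim _ _
    rw [dual.Did M hM] at h0
    exact ⟨fun a b => by
      rw [← LinearMap.id_apply (R := S) a, ← LinearMap.id_apply (R := S) b, h0]; rfl⟩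
  | cons m s M' M hS _ ih =>
    have h1 := D_ses dual hM hS
    have h2 := ((Filt.single Y m).congr (e m).some.symm).ses (ih (hS.finite_left hM)) h1
    rwa [add_comm, Multiset.singleton_add] at h2

variable [IsNoetherianRing S] [IsArtinianRing S]

theorem CF_D {m : Λ} {M : ModuleCat.{0} S} (hM : Module.Finite S ↥M) (h : CF Q m (dual.D M)) :
    CF Q m M := by
  obtain ⟨s, hs, hcf⟩ := filt_L Q hM
  obtain ⟨j, hj, hmj⟩ := h.filt (hs.Dfilt dual dual.DL hM)
  rw [CF_L hmj]
  exact hcf j hj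

/-- The dual of a surjection with superfluous kernel is essential. -/
theorem D_essential {A B : ModuleCat.{0} S} (hA : Module.Finite S ↥A) (hB : Module.Finite S ↥B)
    (p : ↥A →ₗ[S] ↥B) (hp : ∀ N : Submodule S ↥A, N ⊔ LinearMap.ker p = ⊤ → N = ⊤)
    (N : Submodule S ↥(dual.D A)) (hN : N ⊓ LinearMap.range (dual.Dmap p) = ⊥)
    (hps : Function.Surjective p) : N = ⊥ := by
  have hDA := dual.finD A hA
  let Y : ModuleCat.{0} S := ModuleCat.of S (↥(dual.D A) ⧸ N)
  have hY : Module.Finite S ↥Y := inferInstanceAs (Module.Finite S (↥(dual.D A) ⧸ N))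
  have hDY := dual.finD Y hY
  obtain ⟨e⟩ := dual.Dinvol Y hY
  let q : ↥(dual.D A) →ₗ[S] ↥Y := N.mkQ
  obtain ⟨r, hr⟩ := (dual.Dfull hDY hA).2 (e.symm.toLinearMap ∘ₗ q)
  have hr : dual.Dmap r = e.symm.toLinearMap ∘ₗ q := hr
  have h1 : Function.Injective (dual.Dmap (p ∘ₗ r)) := by
    rw [dual.Dcomp hDY hA hB, hr, injective_iff_map_eq_zero]
    intro x hx
    simp only [LinearMap.comp_apply, LinearEquiv.coe_coe, LinearEquiv.map_eq_zero_iff] at hx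
    have hx1 : dual.Dmap p x ∈ N := (Submodule.Quotient.mk_eq_zero _).1 hx
    have hx2 : dual.Dmap p x ∈ N ⊓ LinearMap.range (dual.Dmap p) := ⟨hx1, ⟨x, rfl⟩⟩
    rw [hN] at hx2
    exact D_inj_of_surj dual hA hB p hps (by rw [map_zero]; exact hx2)
  have h2 := surj_of_D_inj dual hDY hB _ h1
  have h3 : LinearMap.range r = ⊤ := by
    apply hp
    rw [eq_top_iff]
    intro x _
    obtain ⟨y, hy⟩ := h2 (p x)
    have : x = r y + (x - r y) := by abel
    rw [this]
    refine Submodule.add_mem_sup ⟨y, rfl⟩ ?_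
    rw [LinearMap.mem_ker, map_sub]
    exact sub_eq_zero.2 hy.symm
  have h4 := D_inj_of_surj dual hDY hA r (LinearMap.range_eq_top.1 h3)
  rw [hr] at h4
  rw [eq_bot_iff]
  intro x hx
  refine h4 ?_
  have : q x = 0 := (Submodule.Quotient.mk_eq_zero _).2 hx
  simp [this]

/-- A map into the dual of an essential extension is surjective if it is so after restriction. -/
theorem D_superfluous {A B X : ModuleCat.{0} S} (hA : Module.Finite S ↥A)
    (hB : Module.Finite S ↥B) (hX : Module.Finite S ↥X)
    (i : ↥A →ₗ[S] ↥B) (hi : ∀ N : Submodule S ↥B, N ⊓ LinearMap.range i = ⊥ → N = ⊥)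
    (t : ↥X →ₗ[S] ↥(dual.D B)) (ht : Function.Surjective (dual.Dmap i ∘ₗ t)) :
    Function.Surjective t := by
  have hDX := dual.finD X hX
  obtain ⟨e⟩ := dual.Dinvol X hX
  obtain ⟨r, hr⟩ := (dual.Dfull hB hDX).2 (t ∘ₗ e.toLinearMap)
  have hr : dual.Dmap r = t ∘ₗ e.toLinearMap := hr
  have h1 : Function.Surjective (dual.Dmap (r ∘ₗ i)) := by
    rw [dual.Dcomp hA hB hDX, hr, ← LinearMap.comp_assoc]
    exact ht.comp e.surjective
  have h2 := inj_of_D_surj dual hA hDX _ h1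
  have h3 : LinearMap.ker r = ⊥ := by
    apply hi
    rw [eq_bot_iff]
    rintro _ ⟨hx, ⟨y, rfl⟩⟩
    have : y = 0 := h2 (by rw [map_zero]; exact hx)
    rw [this, map_zero]
    exact Submodule.zero_mem _
  have h4 := D_surj_of_inj dual hB hDX r (LinearMap.ker_eq_bot.1 h3)
  rw [hr] at h4
  exact Function.Surjective.of_comp h4

/-- The duality exchanges standard and costandard modules. -/
theorem D_std (l : Λ) : Nonempty (↥(dual.D (Q.std l)) ≃ₗ[S] ↥(Q.costd l)) := by
  have hPfin := P_finite Q l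
  have hst := std_finite (Q := Q) l
  have hL : Module.Finite S ↥(Q.L l) := Q.finiteL l
  have hDst := dual.finD _ hst
  obtain ⟨V, ⟨eV⟩, hV1, hV2⟩ := Q.costdSpec l
  obtain ⟨K, ⟨eK⟩, hK1, hK2⟩ := Q.stdSpec l
  obtain ⟨hIinj, ι, hι, hess⟩ := Q.injHull l
  obtain ⟨pP, hpP, hN⟩ := P_top Q l
  obtain ⟨R, ⟨u, p, hu, hp, hup⟩, -⟩ := std_rad (Q := Q) l
  obtain ⟨q, hq⟩ := std_quot (Q := Q) l
  obtain ⟨eL⟩ := dual.DL l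
  -- the kernel of `p` is superfluous
  have hpsup : ∀ N : Submodule S ↥(Q.std l), N ⊔ LinearMap.ker p = ⊤ → N = ⊤ := by
    intro N hNp
    by_contra hne
    have h1 : N.comap q ≠ ⊤ := by
      intro h
      apply hne
      rw [eq_top_iff]
      intro y _
      obtain ⟨x, rfl⟩ := hq y
      have : x ∈ N.comap q := by rw [h]; trivial
      exact this
    have h2 : (LinearMap.ker p).comap q ≠ ⊤ := by
      intro h
      apply ne_zero_of_surj hp
      ext y
      obtain ⟨x, rfl⟩ := hq y
      have : x ∈ (LinearMap.ker p).comap q := by rw [h]; trivial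
      exact this
    have h1 := hN _ h1
    have h2 := hN _ h2
    apply ne_zero_of_surj hpP
    ext x
    have : q x ∈ N ⊔ LinearMap.ker p := by rw [hNp]; trivial
    obtain ⟨a, ha, b, hb, hab⟩ := Submodule.mem_sup.1 this
    obtain ⟨a, rfl⟩ := hq a
    have h3 : pP a = 0 := h1 ha
    have h4 : pP (x - a) = 0 := h2 (by
      show q (x - a) ∈ LinearMap.ker p
      rw [map_sub, ← hab]; simpa using hb)
    rw [map_sub, h3, sub_zero] at h4
    exact h4
  -- embed `D Δ` in `I`
  obtain ⟨j, hj⟩ := hIinj.out (dual.Dmap p) (D_inj_of_surj dual hst hL p hp) (ι ∘ₗ eL.toLinearMap)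
  have hjinj : Function.Injective j := by
    rw [← LinearMap.ker_eq_bot]
    refine D_essential dual hst hL p hpsup _ ?_ hp
    rw [eq_bot_iff]
    rintro _ ⟨hx, ⟨y, rfl⟩⟩
    have h0 : ι (eL y) = 0 := by
      have := hj y
      simp only [LinearMap.comp_apply, LinearEquiv.coe_coe] at this
      rw [← this]; exact hx
    have h1 : eL y = 0 := hι (by rw [h0, map_zero])
    have h2 : y = 0 := by simpa using h1
    rw [h2, map_zero]
    exact Submodule.zero_mem _
  have hιj : LinearMap.range ι ≤ LinearMap.range j := by
    rintro _ ⟨y, rfl⟩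
    refine ⟨dual.Dmap p (eL.symm y), ?_⟩
    rw [hj]; simp
  have hjV : LinearMap.range j ≤ V := by
    apply hV2
    intro m hm
    have h1 := (isCompFactor_iff m _).1 hm
    have h2 : CF Q m (dual.D (Q.std l)) :=
      h1.inj (A := ModuleCat.of S (LinearMap.range j)) (LinearEquiv.ofInjective j hjinj).symm.toLinearMap
        (LinearEquiv.ofInjective j hjinj).symm.injective
    exact CF_std (CF_D dual hst h2)
  have hVj : V ≤ LinearMap.range j := by
    intro v hv
    let V' : Submodule S ↥(Q.I l) := LinearMap.range j ⊔ Submodule.span S {v}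
    have hV'V : V' ≤ V := sup_le hjV (by simpa using hv)
    have hvV' : v ∈ V' := Submodule.mem_sup_right (Submodule.mem_span_singleton_self v)
    let MV : ModuleCat.{0} S := ModuleCat.of S V'
    have hMV : Module.Finite S ↥MV := by
      have : Module.Finite S (LinearMap.range j) := Module.Finite.range j
      exact inferInstanceAs (Module.Finite S (LinearMap.range j ⊔ Submodule.span S {v} : Submodule S ↥(Q.I l)))
    have hDMV := dual.finD MV hMV
    let j' : ↥(dual.D (Q.std l)) →ₗ[S] ↥MV :=
      LinearMap.codRestrict V' j (fun x => Submodule.mem_sup_left ⟨x, rfl⟩)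
    have hj' : Function.Injective j' := fun a b hab => hjinj (congrArg Subtype.val hab)
    let ι' : ↥(Q.L l) →ₗ[S] ↥MV :=
      LinearMap.codRestrict V' ι (fun x => Submodule.mem_sup_left (hιj ⟨x, rfl⟩))
    have hι' : Function.Injective ι' := fun a b hab => hι (congrArg Subtype.val hab)
    have hess' : ∀ N : Submodule S ↥MV, N ⊓ LinearMap.range ι' = ⊥ → N = ⊥ := by
      intro N hN'
      have h1 : N.map V'.subtype = ⊥ := by
        apply hess
        rw [eq_bot_iff]
        rintro _ ⟨⟨x, hx, rfl⟩, ⟨y, hy⟩⟩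
        have : x ∈ N ⊓ LinearMap.range ι' := ⟨hx, ⟨y, Subtype.ext hy⟩⟩
        rw [hN'] at this
        have : x = 0 := this
        rw [this]; simp
      rw [eq_bot_iff]
      intro x hx
      have : V'.subtype x ∈ N.map V'.subtype := ⟨x, hx, rfl⟩
      rw [h1] at this
      exact Subtype.ext this
    -- lift `P → L` to `D V'`
    have hDι := D_surj_of_inj dual hL hMV ι' hι'
    obtain ⟨t, ht⟩ := Module.projective_lifting_property (dual.Dmap ι')
      (eL.symm.toLinearMap ∘ₗ pP) hDι
    have htsurj : Function.Surjective t := by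
      refine D_superfluous dual hL hMV hPfin ι' hess' t ?_
      rw [ht]
      exact eL.symm.surjective.comp hpP
    have hKt : K ≤ LinearMap.ker t := by
      apply hK2
      intro m hm
      have h1 := (isCompFactor_iff m _).1 hm
      have e1 := t.quotKerEquivOfSurjective htsurj
      have h2 : CF Q m (dual.D MV) :=
        h1.inj (A := ModuleCat.of S (↥(Q.P l) ⧸ LinearMap.ker t)) e1.toLinearMap e1.injective
      have h3 : CF Q m MV := CF_D dual hMV h2
      refine hV1 m ((isCompFactor_iff m _).2 ?_)
      exact h3.inj (B := ModuleCat.of S V) (Submodule.inclusion hV'V)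
        (Submodule.inclusion_injective hV'V)
    let t' : ↥(Q.std l) →ₗ[S] ↥(dual.D MV) := (Submodule.liftQ K t hKt) ∘ₗ eK.toLinearMap
    have ht' : Function.Surjective t' := by
      intro y
      obtain ⟨x, rfl⟩ := htsurj y
      refine ⟨eK.symm (Submodule.Quotient.mk x), ?_⟩
      simp [t']
    obtain ⟨e2⟩ := dual.Dinvol (Q.std l) hst
    have hDj := D_surj_of_inj dual hDst hMV j' hj'
    let w : ↥(Q.std l) →ₗ[S] ↥(Q.std l) := e2.toLinearMap ∘ₗ dual.Dmap j' ∘ₗ t'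
    have hw : Function.Surjective w := e2.surjective.comp (hDj.comp ht')
    have hw' : Function.Injective w := IsNoetherian.injective_of_surjective_endomorphism w hw
    have hDjinj : Function.Injective (dual.Dmap j') := by
      intro a b hab
      obtain ⟨a, rfl⟩ := ht' a
      obtain ⟨b, rfl⟩ := ht' b
      have : w a = w b := by simp only [w, LinearMap.comp_apply, hab]
      rw [hw' this]
    obtain ⟨x, hx⟩ := surj_of_D_inj dual hDst hMV j' hDjinj ⟨v, hvV'⟩
    exact ⟨x, congrArg Subtype.val hx⟩
  exact ⟨(LinearEquiv.ofInjective j hjinj).trans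
    ((LinearEquiv.ofEq _ _ (le_antisymm hjV hVj)).trans eV.symm)⟩

end QHAux

namespace QHAux
open QHPaper

section
variable {S : Type} [Ring S]

/-- A short exact sequence, bundled. -/
structure Tri (S : Type) [Ring S] where
  A : ModuleCat.{0} S
  B : ModuleCat.{0} S
  C : ModuleCat.{0} S
  f : ↥A →ₗ[S] ↥B
  g : ↥B →ₗ[S] ↥C
  ex : Ex f g

/-- The end of one triple is the beginning of the next. -/
def Lnk (a b : Tri S) : Prop := Nonempty (↥a.C ≃ₗ[S] ↥b.A)

theorem Lnk.of_eq {a b : Tri S} (h : a.C = b.A) : Lnk a b := by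
  unfold Lnk
  rw [h]
  exact ⟨.refl _ _⟩

theorem SES.tri {A B C : ModuleCat.{0} S} (h : SES A B C) :
    ∃ t : Tri S, t.A = A ∧ t.B = B ∧ t.C = C := by
  obtain ⟨f, g, hx⟩ := h
  exact ⟨⟨A, B, C, f, g, hx⟩, rfl, rfl, rfl⟩

theorem seq_of_tri (d : ℕ) (T : ℕ → Tri S) (h0 : Subsingleton ↥(T 0).A)
    (h1 : Subsingleton ↥(T (d + 1)).C)
    (link : ∀ i, i ≤ d → Nonempty (↥(T i).C ≃ₗ[S] ↥(T (i + 1)).A)) :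
    ∃ f : ∀ i : Fin (d + 1), ↥(T i.castSucc.val).B →ₗ[S] ↥(T i.succ.val).B,
      IsExactSeq S d (fun i => (T i.val).B) f := by
  classical
  let F : ∀ i, i ≤ d → (↥(T i).B →ₗ[S] ↥(T (i + 1)).B) := fun i hi =>
    (T (i + 1)).f ∘ₗ (link i hi).some.toLinearMap ∘ₗ (T i).g
  refine ⟨fun i => F i.val (Nat.lt_succ_iff.1 i.2), ?_, ?_, ?_⟩
  · have : Function.Injective (F 0 (Nat.zero_le d)) := by
      refine (T 1).ex.1.comp ((link 0 (Nat.zero_le d)).some.injective.comp ?_)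
      rw [injective_iff_map_eq_zero]
      intro b hb
      obtain ⟨a, rfl⟩ := ((T 0).ex.2.2 b).1 hb
      rw [Subsingleton.elim a 0, map_zero]
    exact this
  · have : Function.Surjective (F d le_rfl) := by
      refine Function.Surjective.comp (g := (T (d + 1)).f) ?_
        ((link d le_rfl).some.surjective.comp (T d).ex.2.1)
      intro b
      exact ((T (d + 1)).ex.2.2 b).1 (Subsingleton.elim _ _)
    exact this
  · intro i
    have : LinearMap.range (F i.val i.2.le) = LinearMap.ker (F (i.val + 1) i.2) := by
      ext x
      constructor
      · rintro ⟨y, rfl⟩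
        have : (T (i.val + 1)).g (F i.val i.2.le y) = 0 :=
          ((T (i.val + 1)).ex.2.2 _).2 ⟨_, rfl⟩
        change (T (i.val + 2)).f ((link (i.val + 1) i.2).some
          ((T (i.val + 1)).g (F i.val i.2.le y))) = 0
        rw [this, map_zero, map_zero]
      · intro hx
        have hx : (T (i.val + 2)).f ((link (i.val + 1) i.2).some ((T (i.val + 1)).g x)) = 0 := hx
        have h2 : (T (i.val + 1)).g x = 0 := by
          apply (link (i.val + 1) i.2).some.injective
          apply (T (i.val + 2)).ex.1
          rw [hx, map_zero, map_zero]
        obtain ⟨a, rfl⟩ := ((T (i.val + 1)).ex.2.2 _).1 h2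
        obtain ⟨c, rfl⟩ := (link i.val i.2.le).some.surjective a
        obtain ⟨b, rfl⟩ := (T i.val).ex.2.1 c
        exact ⟨b, rfl⟩
    exact this

theorem ses_range {A B C : ModuleCat.{0} S} (f : ↥A →ₗ[S] ↥B) (g : ↥B →ₗ[S] ↥C)
    (h : LinearMap.range f = LinearMap.ker g) :
    SES (ModuleCat.of S (LinearMap.range f)) B (ModuleCat.of S (LinearMap.range g)) := by
  refine ⟨(LinearMap.range f).subtype, g.rangeRestrict, Subtype.val_injective,
    LinearMap.surjective_rangeRestrict g, fun b => ?_⟩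
  have h1 : b ∈ LinearMap.range f ↔ b ∈ LinearMap.ker g := by rw [h]
  constructor
  · intro hb
    exact ⟨⟨b, h1.2 (congrArg Subtype.val hb)⟩, rfl⟩
  · rintro ⟨a, rfl⟩
    exact Subtype.ext (h1.1 a.2)

end

variable {S : Type} [Ring S] {Λ : Type} [Fintype Λ] [PartialOrder Λ]

/-- `M` has a costandard filtration. -/
def FN (Q : QHData S Λ) (M : ModuleCat.{0} S) : Prop := ∃ s, Filt Q.costd s M

/-- `M` has a coresolution of length `d` by modules in `F(∇)` (recursive form). -/
def G (Q : QHData S Λ) : ℕ → ModuleCat.{0} S → Prop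
  | 0, M => FN Q M
  | d + 1, M => ∃ F K : ModuleCat.{0} S, SES M F K ∧ FN Q F ∧ G Q d K

variable {Q : QHData S Λ}

theorem FN.congr {M N : ModuleCat.{0} S} (h : FN Q M) (e : ↥M ≃ₗ[S] ↥N) : FN Q N := by
  obtain ⟨s, hs⟩ := h
  exact ⟨s, hs.congr e⟩

theorem G.congr {d : ℕ} {M N : ModuleCat.{0} S} (h : G Q d M) (e : ↥M ≃ₗ[S] ↥N) : G Q d N := by
  cases d with
  | zero => exact FN.congr h e
  | succ d =>
    obtain ⟨K, F, h1, h2, h3⟩ := h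
    exact ⟨K, F, h1.congr e (.refl _ _) (.refl _ _), h2, h3⟩

theorem inStd_iff (M : ModuleCat.{0} S) : InStdFilt S Q M ↔ FD Q M := by
  constructor
  · rintro ⟨n, f, g, h⟩
    exact ⟨_, filt_of_hasFiltration Q.std M n f g h⟩
  · rintro ⟨s, hs⟩
    exact hasFiltration_of_filt hs

theorem inCostd_iff (M : ModuleCat.{0} S) : InCostdFilt S Q M ↔ FN Q M := by
  constructor
  · rintro ⟨n, f, g, h⟩
    exact ⟨_, filt_of_hasFiltration Q.costd M n f g h⟩
  · rintro ⟨s, hs⟩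
    exact hasFiltration_of_filt hs

theorem W_of_wfdLE {M : ModuleCat.{0} S} {d : ℕ} (h : WfdLE S Q M d) : W Q d M := by
  obtain ⟨N, f, ⟨hi, hs, hex⟩, rfl, hN⟩ := h
  have key : ∀ i (hi : i < d + 1), W Q i (ModuleCat.of S (LinearMap.range (f ⟨i, hi⟩))) := by
    intro i
    induction i with
    | zero =>
      intro h0
      exact FD.congr ((inStd_iff _).1 (hN 0)) (LinearEquiv.ofInjective (f 0) hi)
    | succ i ih =>
      intro h1
      have h2 := hex ⟨i, by omega⟩
      exact ⟨_, _, ses_range _ _ h2, (inStd_iff _).1 (hN ⟨i + 1, h1⟩), ih (by omega)⟩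
  have h2 : LinearMap.range (f (Fin.last d)) = ⊤ := LinearMap.range_eq_top.2 hs
  exact (key d (by omega)).congr (LinearEquiv.ofTop _ h2)

theorem G_of_gfdLE {M : ModuleCat.{0} S} {d : ℕ} (h : GfdLE S Q M d) : G Q d M := by
  obtain ⟨N, f, ⟨hi, hs, hex⟩, rfl, hN⟩ := h
  have key : ∀ e i (hi : i + e = d),
      G Q e (ModuleCat.of S (LinearMap.range (f ⟨i, by omega⟩))) := by
    intro e
    induction e with
    | zero =>
      intro i hid
      obtain rfl : i = d := by omega
      have h2 : LinearMap.range (f (Fin.last i)) = ⊤ := LinearMap.range_eq_top.2 hs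
      exact FN.congr ((inCostd_iff _).1 (hN (Fin.last i))) (LinearEquiv.ofTop _ h2).symm
    | succ e ih =>
      intro i hid
      have h2 := hex ⟨i, by omega⟩
      exact ⟨_, _, ses_range _ _ h2, (inCostd_iff _).1 (hN ⟨i, by omega⟩), ih (i + 1) (by omega)⟩
  exact (key d 0 (by omega)).congr (LinearEquiv.ofInjective (f 0) hi).symm

theorem W.tri {M : ModuleCat.{0} S} {d : ℕ} (h : W Q d M) : ∃ T : ℕ → Tri S,
    Subsingleton ↥(T 0).A ∧ Subsingleton ↥(T (d + 1)).C ∧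
    (∀ i, i ≤ d → Nonempty (↥(T i).C ≃ₗ[S] ↥(T (i + 1)).A)) ∧
    (T (d + 1)).A = M ∧ (T (d + 1)).B = M ∧ ∀ i, i ≤ d → FD Q (T i).B := by
  obtain ⟨e, e1, e2, e3⟩ := (ses_zero_right M).tri
  induction d generalizing M e with
  | zero =>
    obtain ⟨t, t1, t2, t3⟩ := (ses_zero_left M).tri
    refine ⟨fun i => if i = 0 then t else e, ?_, ?_, ?_, ?_, ?_, ?_⟩
    · simp only [if_true, t1]; infer_instance
    · simp only [Nat.add_eq_zero_iff, one_ne_zero, and_false, if_false, e3]; infer_instance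
    · intro i hi
      obtain rfl : i = 0 := by omega
      exact Lnk.of_eq (t3.trans e1.symm)
    · simpa using e1
    · simpa using e2
    · intro i hi
      obtain rfl : i = 0 := by omega
      simp only [if_true, t2]
      exact h
  | succ d ih =>
    obtain ⟨K, F, h1, h2, h3⟩ := h
    obtain ⟨t, t1, t2, t3⟩ := h1.tri
    obtain ⟨eK, k1, k2, k3⟩ := (ses_zero_right K).tri
    obtain ⟨T, a1, a2, a3, a4, a5, a6⟩ := ih h3 eK k1 k2 k3
    refine ⟨fun i => if i ≤ d then T i else if i = d + 1 then t else e, ?_, ?_, ?_, ?_, ?_, ?_⟩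
    · simpa using a1
    · have n1 : ¬ (d + 1 + 1 ≤ d) := by omega
      have n2 : ¬ (d + 1 + 1 = d + 1) := by omega
      simp only [n1, n2, if_false, e3]; infer_instance
    · intro i hi
      rcases Nat.lt_or_ge i d with hid | hid
      · have n1 : i ≤ d := by omega
        have n2 : i + 1 ≤ d := by omega
        change Lnk (if i ≤ d then T i else if i = d + 1 then t else e)
          (if i + 1 ≤ d then T (i + 1) else if i + 1 = d + 1 then t else e)
        rw [if_pos n1, if_pos n2]
        exact a3 i n1
      · rcases Nat.eq_or_lt_of_le hid with rfl | hid
        · have n1 : ¬ (d + 1 ≤ d) := by omega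
          change Lnk (if d ≤ d then T d else if d = d + 1 then t else e)
            (if d + 1 ≤ d then T (d + 1) else if d + 1 = d + 1 then t else e)
          rw [if_pos le_rfl, if_neg n1, if_pos rfl]
          have := a3 d le_rfl
          rw [a4, ← t1] at this
          exact this
        · obtain rfl : i = d + 1 := by omega
          have n1 : ¬ (d + 1 + 1 ≤ d) := by omega
          have n2 : ¬ (d + 1 + 1 = d + 1) := by omega
          have n3 : ¬ (d + 1 ≤ d) := by omega
          change Lnk (if d + 1 ≤ d then T (d + 1) else if d + 1 = d + 1 then t else e)
            (if d + 1 + 1 ≤ d then T (d + 1 + 1) else if d + 1 + 1 = d + 1 then t else e)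
          rw [if_neg n3, if_pos rfl, if_neg n1, if_neg n2]
          exact Lnk.of_eq (t3.trans e1.symm)
    · have n1 : ¬ (d + 1 + 1 ≤ d) := by omega
      have n2 : ¬ (d + 1 + 1 = d + 1) := by omega
      simp only [n1, n2, if_false, e1]
    · have n1 : ¬ (d + 1 + 1 ≤ d) := by omega
      have n2 : ¬ (d + 1 + 1 = d + 1) := by omega
      simp only [n1, n2, if_false, e2]
    · intro i hi
      rcases Nat.lt_or_ge d i with hid | hid
      · obtain rfl : i = d + 1 := by omega
        have n3 : ¬ (d + 1 ≤ d) := by omega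
        simp only [n3, if_false, if_true, t2]
        exact h2
      · simp only [hid, if_true]
        exact a6 i hid

theorem wfdLE_iff (M : ModuleCat.{0} S) (d : ℕ) : WfdLE S Q M d ↔ W Q d M := by
  refine ⟨W_of_wfdLE, fun h => ?_⟩
  obtain ⟨T, a1, a2, a3, a4, a5, a6⟩ := h.tri
  obtain ⟨f, hf⟩ := seq_of_tri d T a1 a2 a3
  exact ⟨fun i => (T i.val).B, f, hf, a5, fun i =>
    (inStd_iff _).2 (a6 i.val (Nat.lt_succ_iff.1 i.2))⟩

theorem G.tri {M : ModuleCat.{0} S} {d : ℕ} (h : G Q d M) : ∃ T : ℕ → Tri S,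
    Subsingleton ↥(T 0).A ∧ Subsingleton ↥(T (d + 1)).C ∧
    (∀ i, i ≤ d → Nonempty (↥(T i).C ≃ₗ[S] ↥(T (i + 1)).A)) ∧
    (T 0).C = M ∧ (T 0).B = M ∧ ∀ i, i ≤ d → FN Q (T (i + 1)).B := by
  obtain ⟨e, e1, e2, e3⟩ := (ses_zero_left M).tri
  induction d generalizing M e with
  | zero =>
    obtain ⟨t, t1, t2, t3⟩ := (ses_zero_right M).tri
    refine ⟨fun i => Nat.casesOn i e (fun _ => t), ?_, ?_, ?_, e3, e2, ?_⟩
    · change Subsingleton ↥e.A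
      rw [e1]; infer_instance
    · change Subsingleton ↥t.C
      rw [t3]; infer_instance
    · intro i hi
      obtain rfl : i = 0 := by omega
      change Nonempty (↥e.C ≃ₗ[S] ↥t.A)
      rw [e3, t1]
      exact ⟨.refl _ _⟩
    · intro i hi
      change FN Q t.B
      rw [t2]
      exact h
  | succ d ih =>
    obtain ⟨F, K, h1, h2, h3⟩ := h
    obtain ⟨t, t1, t2, t3⟩ := h1.tri
    obtain ⟨eK, k1, k2, k3⟩ := (ses_zero_left K).tri
    obtain ⟨T, a1, a2, a3, a4, a5, a6⟩ := ih h3 eK k1 k2 k3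
    refine ⟨fun i => Nat.casesOn i e (fun j => Nat.casesOn j t (fun l => T (l + 1))),
      ?_, a2, ?_, e3, e2, ?_⟩
    · change Subsingleton ↥e.A
      rw [e1]; infer_instance
    · intro i hi
      match i with
      | 0 =>
        change Nonempty (↥e.C ≃ₗ[S] ↥t.A)
        rw [e3, t1]
        exact ⟨.refl _ _⟩
      | 1 =>
        change Nonempty (↥t.C ≃ₗ[S] ↥(T 1).A)
        rw [t3]
        have := a3 0 (Nat.zero_le d)
        rwa [a4] at this
      | i + 2 => exact a3 (i + 1) (by omega)
    · intro i hi
      match i with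
      | 0 =>
        change FN Q t.B
        rw [t2]
        exact h2
      | i + 1 => exact a6 i (by omega)

theorem gfdLE_iff (M : ModuleCat.{0} S) (d : ℕ) : GfdLE S Q M d ↔ G Q d M := by
  refine ⟨G_of_gfdLE, fun h => ?_⟩
  obtain ⟨T, a1, a2, a3, a4, a5, a6⟩ := h.tri
  obtain ⟨f, hf⟩ := seq_of_tri d T a1 a2 a3
  exact ⟨fun i => (T i.val).B, f, hf, a5, fun i =>
    (inCostd_iff _).2 (a6 i.val (Nat.lt_succ_iff.1 i.2))⟩

variable [IsNoetherianRing S] [IsArtinianRing S] (dual : Duality S Q)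

theorem costd_finite (l : Λ) (dual : Duality S Q) : Module.Finite S ↥(Q.costd l) := by
  obtain ⟨e⟩ := D_std dual l
  have := dual.finD _ (std_finite (Q := Q) l)
  exact Module.Finite.equiv e

theorem D_costd (l : Λ) : Nonempty (↥(dual.D (Q.costd l)) ≃ₗ[S] ↥(Q.std l)) := by
  obtain ⟨e⟩ := D_std dual l
  have hs := std_finite (Q := Q) l
  obtain ⟨e1⟩ := Dequiv dual (dual.finD _ hs) (costd_finite l dual) e
  obtain ⟨e2⟩ := dual.Dinvol _ hs
  exact ⟨e1.symm.trans e2⟩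

theorem FD.D {M : ModuleCat.{0} S} (h : FD Q M) : FN Q (dual.D M) := by
  have hM := h.finite
  obtain ⟨s, hs⟩ := h
  exact ⟨s, hs.Dfilt dual (D_std dual) hM⟩

theorem FN.fin {M : ModuleCat.{0} S} (h : FN Q M) (dual : Duality S Q) :
    Module.Finite S ↥M := by
  obtain ⟨s, hs⟩ := h
  exact hs.finite (fun m => costd_finite m dual)

theorem FN.D {M : ModuleCat.{0} S} (h : FN Q M) : FD Q (dual.D M) := by
  have hM := h.fin dual
  obtain ⟨s, hs⟩ := h
  exact ⟨s, hs.Dfilt dual (D_costd dual) hM⟩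

theorem W.D {d : ℕ} {M : ModuleCat.{0} S} (h : W Q d M) : G Q d (dual.D M) := by
  induction d generalizing M with
  | zero => exact FD.D dual h
  | succ d ih =>
    obtain ⟨K, F, h1, h2, h3⟩ := h
    exact ⟨_, _, D_ses dual h2.finite h1, h2.D dual, ih h3⟩

theorem G.D {d : ℕ} {M : ModuleCat.{0} S} (h : G Q d M) : W Q d (dual.D M) := by
  induction d generalizing M with
  | zero => exact FN.D dual h
  | succ d ih =>
    obtain ⟨K, F, h1, h2, h3⟩ := h
    exact ⟨_, _, D_ses dual (h2.fin dual) h1, h2.D dual, ih h3⟩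

theorem W_L_iff (d : ℕ) (l : Λ) (dual : Duality S Q) : W Q d (Q.L l) ↔ G Q d (Q.L l) := by
  obtain ⟨e⟩ := dual.DL l
  exact ⟨fun h => (h.D dual).congr e, fun h => (h.D dual).congr e⟩

theorem gfd_L (l : Λ) (dual : Duality S Q) : gfd S Q (Q.L l) = wfd S Q (Q.L l) := by
  unfold gfd wfd
  congr 1
  ext d
  exact (gfdLE_iff _ _).trans ((W_L_iff d l dual).symm.trans (wfdLE_iff _ _).symm)

theorem wfd_mem (l : Λ) : W Q (wfd S Q (Q.L l)) (Q.L l) := by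
  obtain ⟨d, hd⟩ := W.exists_L (Q := Q) l
  have : {d | WfdLE S Q (Q.L l) d}.Nonempty := ⟨d, (wfdLE_iff _ _).2 hd⟩
  exact (wfdLE_iff _ _).1 (Nat.sInf_mem this)

theorem propD_of_propA (dual : Duality S Q) (hA : PropA S Q) : PropD S Q := by
  intro l
  obtain ⟨c, hc⟩ : ∃ C : ModuleCat.{0} S, SES (Q.L l) (Q.costd l) C := by
    obtain ⟨R, hR, _⟩ := std_rad (Q := Q) l
    have h1 := D_ses dual (std_finite (Q := Q) l) hR
    exact ⟨_, h1.congr (dual.DL l).some (D_std dual l).some (.refl _ _)⟩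
  obtain ⟨h1, h2⟩ := core (Q := Q) (d := wfd S Q (Q.L l)) (l := l) hc (.refl _ _)
    (costd_finite l dual)
    (fun j hj => by
      have hjl := CF_costd hj
      rcases hjl.eq_or_lt with rfl | hlt
      · exact wfd_mem j
      · have := hA j l hlt
        rw [gfd_L j dual, gfd_L l dual] at this
        exact (wfd_mem j).mono this)
    (fun e he => Nat.sInf_le ((wfdLE_iff _ _).2 he))
  apply le_antisymm
  · exact Nat.sInf_le ((wfdLE_iff _ _).2 h1)
  · have : {d | WfdLE S Q (Q.costd l) d}.Nonempty := ⟨_, (wfdLE_iff _ _).2 h1⟩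
    exact h2 _ ((wfdLE_iff _ _).1 (Nat.sInf_mem this))

end QHAux

open QHPaper in
/-- Let `S` be a quasi-hereditary algebra with a simple-preserving duality
whose partial order is minimal for the quasi-hereditary structure. If `S` satisfies
property A, then `S` satisfies property D. -/
theorem stmt14 (k S Λ : Type) [Field k] [Ring S] [Algebra k S] [FiniteDimensional k S]
    [Fintype Λ] [PartialOrder Λ]
    (QH : QHData S Λ) (dual : Duality S QH) (hmin : MinimalOrder S QH)
    (hA : PropA S QH) :
    PropD S QH := by
  have : IsNoetherianRing S := IsNoetherianRing.of_finite k S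
  have : IsArtinianRing S := IsArtinianRing.of_finite k S
  exact QHAux.propD_of_propA dual hA
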